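/- arXiv:1507.08517 — 5 statements merged into one kernel-verified Lean document; each statement's English description precedes it below -/
import Mathlib

section
/- Let R be a local Noetherian F_q-algebra with maximal ideal m, Λ an F_q-algebra, and F the endomorphism of Λ ⊗_{F_q} R acting as the q-power Frobenius on R and identity on Λ. If an ideal I ⊆ Λ ⊗_{F_q} R is generated by F(I), then I = (I ∩ Λ)·(Λ ⊗_{F_q} R), i.e. I is the extension of the ideal I ∩ Λ of Λ. -/
/-!
Put `W = I ∩ Λ` and choose an `Fq`-basis of `Λ` adapted to `W`, so that `Λ ⊗ R` becomes a free
`R`-module on which `F` is the coordinatewise `q`-power map. The claim is that the coordinates of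
elements of `I` along the basis vectors outside `W` all vanish (`coord_eq_zero`).

* Modulo the maximal ideal `m`, among the elements of `I` supported off `W`, one with fewest
  coordinates outside `m`, scaled so that one coordinate is `1`, is congruent to its Frobenius,
  hence to a vector `w` of constants in `Fq`. Its Frobenius iterates converge `m`-adically to `w`
  within a fixed finite set of coordinates, so Krull's intersection theorem puts `w` in `I`, thus
  in `W`; since `w` is supported off `W`, it is zero, a contradiction
  (`mem_maximalIdeal_of_supported`, `const_mem`). So these coordinates lie in `m`.
* As `I` is generated by `F(I)`, these coordinates are then `R`-combinations of `q`-th powers of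
  such coordinates, so they lie in every power of `m`, and vanish by Krull's theorem again.
-/

open TensorProduct

open IsLocalRing in
/-- In a local `Fq`-algebra, an element fixed by Frobenius modulo the maximal ideal is congruent
to a constant. -/
lemma exists_const_of_pow_sub_mem
    {Fq R : Type} [Field Fq] [Fintype Fq] [CommRing R] [Algebra Fq R] [IsLocalRing R]
    {a : R} (ha : a ^ Fintype.card Fq - a ∈ maximalIdeal R) :
    ∃ c : Fq, a - algebraMap Fq R c ∈ maximalIdeal R := by
  have hprod : (∏ c : Fq, (Polynomial.X - Polynomial.C c)) =
      Polynomial.X ^ Fintype.card Fq - Polynomial.X := by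
    have hq : 1 < Fintype.card Fq := Fintype.one_lt_card
    have hm : (Polynomial.X ^ Fintype.card Fq - Polynomial.X : Polynomial Fq).Monic :=
      Polynomial.monic_X_pow_sub (by rw [Polynomial.degree_X]; exact_mod_cast hq)
    have h := Polynomial.prod_multiset_X_sub_C_of_monic_of_roots_card_eq hm (by
      rw [FiniteField.roots_X_pow_card_sub_X, FiniteField.X_pow_card_sub_X_natDegree_eq Fq hq]
      simp)
    rw [FiniteField.roots_X_pow_card_sub_X] at h
    exact h
  have h := congrArg (Polynomial.aeval a) hprod
  simp only [map_prod, map_sub, map_pow, Polynomial.aeval_X, Polynomial.aeval_C] at h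
  rw [← h, Ideal.IsPrime.prod_mem_iff] at ha
  obtain ⟨c, -, hc⟩ := ha
  exact ⟨c, hc⟩

open IsLocalRing in
/-- Krull's intersection theorem: submodules of finite free modules are `m`-adically closed. -/
lemma mem_of_forall_close {R ι P : Type} [CommRing R] [IsNoetherianRing R] [IsLocalRing R]
    [Finite ι] [AddCommGroup P] [Module R P] (g : (ι → R) →ₗ[R] P) (M : Submodule R P)
    (u : ι → R) (h : ∀ n : ℕ, ∃ v, g v ∈ M ∧ ∀ i, u i - v i ∈ maximalIdeal R ^ n) :
    g u ∈ M := by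
  classical
  have := Fintype.ofFinite ι
  have hbot := Ideal.iInf_pow_smul_eq_bot_of_isLocalRing (M := (ι → R) ⧸ M.comap g)
    (maximalIdeal R) (maximalIdeal.isMaximal R).ne_top
  have hu : (M.comap g).mkQ u ∈ (⨅ n : ℕ, maximalIdeal R ^ n • ⊤ :
      Submodule R ((ι → R) ⧸ M.comap g)) := by
    refine Submodule.mem_iInf _ |>.2 fun n => ?_
    obtain ⟨v, hv, huv⟩ := h n
    have e : (M.comap g).mkQ u = (M.comap g).mkQ (u - v) := by
      have h0 : (M.comap g).mkQ v = 0 :=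
        (Submodule.Quotient.mk_eq_zero _).2 (show v ∈ M.comap g from hv)
      rw [map_sub, h0, sub_zero]
    rw [e, pi_eq_sum_univ' (u - v), map_sum]
    refine Submodule.sum_mem _ fun i _ => ?_
    rw [map_smul]
    exact Submodule.smul_mem_smul (huv i) trivial
  rw [hbot] at hu
  exact (Submodule.Quotient.mk_eq_zero (M.comap g)).1 hu

lemma pow_card_mem {Fq R : Type} [Field Fq] [Fintype Fq] [CommRing R] {J : Ideal R} {a : R}
    {n : ℕ} (ha : a ∈ J ^ (n + 1)) :
    a ^ Fintype.card Fq ∈ J ^ (n + 2) := by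
  have h := Ideal.pow_mem_pow ha (Fintype.card Fq)
  rw [← pow_mul] at h
  have hq : 1 < Fintype.card Fq := Fintype.one_lt_card
  exact Ideal.pow_le_pow_right (by nlinarith) h

section Coordinates

open IsLocalRing

variable {Fq R B : Type} [Field Fq] [Fintype Fq] [CommRing R] [Algebra Fq R]

/-- Coordinatewise `q`-power Frobenius on the free module `B →₀ R`. -/
noncomputable def coordFrob (Fq R B : Type) [Field Fq] [Fintype Fq] [CommRing R] [Algebra Fq R] :
    (B →₀ R) →ₗ[Fq] (B →₀ R) :=
  Finsupp.mapRange.linearMap (FiniteField.frobeniusAlgHom Fq R).toLinearMap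

lemma coordFrob_apply (x : B →₀ R) (b : B) :
    coordFrob Fq R B x b = x b ^ Fintype.card Fq := rfl

variable [IsNoetherianRing R] [IsLocalRing R]

/-- If a Frobenius-stable submodule contains an element congruent modulo `m` to a vector `w` of
constants, it contains `w`: the Frobenius iterates of the element converge `m`-adically to `w`
without leaving a fixed finite set of coordinates. -/
lemma const_mem (M : Submodule R (B →₀ R)) (h1 : ∀ x ∈ M, coordFrob Fq R B x ∈ M)
    (w : B →₀ Fq) (x : B →₀ R) (hx : x ∈ M)
    (hxw : ∀ b, x b - algebraMap Fq R (w b) ∈ maximalIdeal R) (hw : ∀ b, x b = 0 → w b = 0) :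
    w.mapRange (algebraMap Fq R) (map_zero _) ∈ M := by
  have iter : ∀ n : ℕ, ∃ y ∈ M, (∀ b, x b = 0 → y b = 0) ∧
      ∀ b, y b - algebraMap Fq R (w b) ∈ maximalIdeal R ^ (n + 1) := by
    intro n
    induction n with
    | zero => exact ⟨x, hx, fun _ h => h, by simpa using hxw⟩
    | succ n ih =>
      obtain ⟨y, hy, hy0, hyw⟩ := ih
      refine ⟨_, h1 y hy, fun b hb => ?_, fun b => ?_⟩
      · rw [coordFrob_apply, hy0 b hb, zero_pow Fintype.card_ne_zero]
      · have := pow_card_mem (Fq := Fq) (hyw b)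
        rw [← FiniteField.frobeniusAlgHom_apply Fq R, map_sub, AlgHom.commutes] at this
        exact this
  let g : (x.support → R) →ₗ[R] (B →₀ R) :=
    Fintype.linearCombination R (fun b => Finsupp.single (b : B) 1)
  have hg : ∀ z : B →₀ R, (∀ b, x b = 0 → z b = 0) → g (fun b => z b) = z := by
    intro z hz
    have hs : z.support ⊆ x.support := fun b hb => by
      rw [Finsupp.mem_support_iff] at hb ⊢
      exact fun h => hb (hz b h)
    conv_rhs => rw [← Finsupp.sum_single z, Finsupp.sum_of_support_subset _ hs _ (by simp)]
    rw [← Finset.sum_coe_sort]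
    simp [g, Fintype.linearCombination_apply]
  rw [← hg (w.mapRange _ _) (fun b hb => by simp [hw b hb])]
  refine mem_of_forall_close g M _ fun n => ?_
  obtain ⟨y, hy, hy0, hyw⟩ := iter n
  refine ⟨fun b => y b, by rwa [hg y hy0], fun b => ?_⟩
  have := Ideal.pow_le_pow_right (Nat.le_succ n) (hyw b)
  rw [← neg_mem_iff]
  simpa using this

/-- Elements of a Frobenius-stable submodule supported in `S` vanish modulo `m` when the submodule
has no nonzero vector of constants supported in `S`. An element with fewest coordinates outside
`m`, one of them normalised to `1`, would be congruent to its Frobenius, hence to constants. -/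
lemma mem_maximalIdeal_of_supported (S : Set B) (M : Submodule R (B →₀ R))
    (h1 : ∀ x ∈ M, coordFrob Fq R B x ∈ M)
    (h4 : ∀ w : B →₀ Fq, (∀ b ∉ S, w b = 0) →
      w.mapRange (algebraMap Fq R) (map_zero _) ∈ M → w = 0)
    (x : B →₀ R) (hx : x ∈ M) (hxS : ∀ b ∉ S, x b = 0) (b : B) : x b ∈ maximalIdeal R := by
  classical
  have key : ∀ n : ℕ, ∀ x ∈ M, (∀ b ∉ S, x b = 0) →
      (x.support.filter (fun b => x b ∉ maximalIdeal R)).card ≤ n →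
      ∀ b, x b ∈ maximalIdeal R := by
    intro n
    induction n with
    | zero =>
      intro x hx hxS hc b
      by_contra hb
      have : b ∈ x.support.filter (fun b => x b ∉ maximalIdeal R) := by
        rw [Finset.mem_filter, Finsupp.mem_support_iff]
        exact ⟨fun h => hb (h ▸ zero_mem _), hb⟩
      rw [Finset.card_eq_zero.1 (Nat.le_zero.1 hc)] at this
      exact Finset.notMem_empty _ this
    | succ n ih =>
      intro x hx hxS hc b
      by_contra hb
      obtain ⟨u, hu⟩ : IsUnit (x b) := by simpa using hb
      set y : B →₀ R := (↑u⁻¹ : R) • x with hy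
      have hyM : y ∈ M := M.smul_mem _ hx
      have hyb : y b = 1 := by simp [hy, ← hu]
      have hyx : ∀ a, x a ∈ maximalIdeal R → y a ∈ maximalIdeal R := fun a ha =>
        Ideal.mul_mem_left _ _ ha
      have hy0 : ∀ a, x a = 0 → y a = 0 := fun a ha => by simp [hy, ha]
      have hd := ih (coordFrob Fq R B y - y) (M.sub_mem (h1 y hyM) hyM)
        (fun a ha => by
          simp [coordFrob_apply, hy0 a (hxS a ha), zero_pow Fintype.card_ne_zero]) (by
          have hlt : ((coordFrob Fq R B y - y).support.filter
              (fun b => (coordFrob Fq R B y - y) b ∉ maximalIdeal R)).card <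
              (x.support.filter (fun b => x b ∉ maximalIdeal R)).card := by
            refine Finset.card_lt_card (Finset.ssubset_iff_of_subset ?_ |>.2 ⟨b, ?_, ?_⟩)
            · intro a ha
              have hxa : x a ∉ maximalIdeal R := fun hxa => (Finset.mem_filter.1 ha).2
                (Ideal.sub_mem _ (Ideal.pow_mem_of_mem _ (hyx a hxa) _ Fintype.card_pos)
                  (hyx a hxa))
              rw [Finset.mem_filter, Finsupp.mem_support_iff]
              exact ⟨fun h => hxa (h ▸ zero_mem _), hxa⟩
            · rw [Finset.mem_filter, Finsupp.mem_support_iff]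
              exact ⟨fun h => hb (h ▸ zero_mem _), hb⟩
            · simp [coordFrob_apply, hyb]
          omega)
      choose c hc using fun a => exists_const_of_pow_sub_mem (Fq := Fq) (hd a)
      -- Off the support of `y` the constant is taken to be `0`, so as to stay finitely supported.
      let w : B →₀ Fq := Finsupp.onFinset y.support (fun a => if y a = 0 then 0 else c a) (by
        intro a ha
        rw [Finsupp.mem_support_iff]
        exact fun h => ha (if_pos h))
      have hwa : ∀ a, w a = if y a = 0 then 0 else c a := fun a => rfl
      have hyw : ∀ a, y a - algebraMap Fq R (w a) ∈ maximalIdeal R := by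
        intro a
        rw [hwa]
        split_ifs with h
        · simp [h]
        · exact hc a
      have hw := h4 w (fun a ha => by rw [hwa, if_pos (hy0 a (hxS a ha))])
        (const_mem M h1 w y hyM hyw (fun a ha => by rw [hwa, if_pos ha]))
      have := hyw b
      rw [hw, hyb] at this
      simp at this
  exact key _ x hx hxS le_rfl b

/-- The theorem in coordinates: the coordinates in `S` vanish on a submodule `M` generated by its
Frobenius image, provided `M` contains the basis vectors outside `S` and no nonzero vector of
constants supported in `S`. -/
lemma coord_eq_zero (S : Set B) (M : Submodule R (B →₀ R))
    (h1 : ∀ x ∈ M, coordFrob Fq R B x ∈ M)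
    (h2 : M ≤ Submodule.span R (coordFrob Fq R B '' M))
    (h3 : ∀ b ∉ S, Finsupp.single b 1 ∈ M)
    (h4 : ∀ w : B →₀ Fq, (∀ b ∉ S, w b = 0) →
      w.mapRange (algebraMap Fq R) (map_zero _) ∈ M → w = 0)
    (x : B →₀ R) (hx : x ∈ M) (b : B) (hb : b ∈ S) : x b = 0 := by
  classical
  have key : ∀ n : ℕ, ∀ x ∈ M, ∀ b ∈ S, x b ∈ maximalIdeal R ^ (n + 1) := by
    intro n
    induction n with
    | zero =>
      intro x hx b hb
      have hxS : x.filter (· ∈ S) ∈ M := by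
        rw [← Finsupp.filter_add_filter_not x (· ∈ S)] at hx
        refine (M.add_mem_iff_left ?_).1 hx
        rw [← Finsupp.sum_single (x.filter _)]
        refine M.sum_mem fun a ha => ?_
        rw [← mul_one (Finsupp.filter _ x a), ← smul_eq_mul, ← Finsupp.smul_single]
        rw [Finsupp.support_filter, Finset.mem_filter] at ha
        exact M.smul_mem _ (h3 a ha.2)
      have := mem_maximalIdeal_of_supported S M h1 h4 _ hxS
        (fun a ha => Finsupp.filter_apply_neg _ _ ha) b
      rw [Finsupp.filter_apply_pos (· ∈ S) x hb] at this
      simpa using this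
    | succ n ih =>
      intro x hx b hb
      refine Submodule.closure_induction (p := fun x _ => x b ∈ maximalIdeal R ^ (n + 2))
        (zero_mem _) (fun x y _ _ hx hy => add_mem hx hy) ?_ (h2 hx)
      rintro r _ ⟨y, hy, rfl⟩
      exact Ideal.mul_mem_left _ _ (pow_card_mem (ih y hy b hb))
  have hbot := Ideal.iInf_pow_eq_bot_of_isLocalRing (maximalIdeal R)
    (maximalIdeal.isMaximal R).ne_top
  have : x b ∈ (⨅ n : ℕ, maximalIdeal R ^ n) :=
    Submodule.mem_iInf _ |>.2 fun n => Ideal.pow_le_pow_right (Nat.le_succ n) (key n x hx b hb)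
  rw [hbot] at this
  exact this

end Coordinates

/-- A basis of a vector space containing a basis of a given subspace `W`: the vectors indexed by
the complement of `S` lie in `W`, and those indexed by `S` are independent modulo `W`. -/
lemma exists_adapted_basis {K V : Type} [Field K] [AddCommGroup V] [Module K V]
    (W : Submodule K V) :
    ∃ (B : Type) (S : Set B) (b : Module.Basis B K V), (∀ i ∉ S, b i ∈ W) ∧
      ∀ w : B →₀ K, (∀ i ∉ S, w i = 0) → w.linearCombination K b ∈ W → w = 0 := by
  classical
  obtain ⟨W', hW⟩ := W.exists_isCompl
  let b := ((Module.Basis.ofVectorSpace K W).prod (Module.Basis.ofVectorSpace K W')).map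
    (Submodule.prodEquivOfIsCompl W W' hW)
  refine ⟨_, Set.range Sum.inr, b, ?_, fun w hw hwW => ?_⟩
  · rintro (i | i) hi
    · simp [b]
    · exact absurd ⟨i, rfl⟩ hi
  · have hwW' : w.linearCombination K b ∈ W' := by
      rw [Finsupp.linearCombination_apply]
      refine W'.sum_mem fun i hi => ?_
      rcases i with i | i
      · exact absurd (hw _ (by simp)) (Finsupp.mem_support_iff.1 hi)
      · exact W'.smul_mem _ (by simp [b])
    have h0 := Submodule.disjoint_def.1 hW.disjoint _ hwW hwW'
    exact linearIndependent_iff.1 b.linearIndependent w h0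


theorem invariant_ideal_extended
    (Fq : Type) [Field Fq] [Fintype Fq]
    (Λ : Type) [CommRing Λ] [Algebra Fq Λ]
    (R : Type) [CommRing R] [Algebra Fq R] [IsNoetherianRing R] [IsLocalRing R]
    (F : (Λ ⊗[Fq] R) →+* (Λ ⊗[Fq] R))
    (hF : ∀ (l : Λ) (r : R), F (l ⊗ₜ[Fq] r) = l ⊗ₜ[Fq] (r ^ Fintype.card Fq))
    (I : Ideal (Λ ⊗[Fq] R))
    (hgen : I = Ideal.span (⇑F '' (I : Set (Λ ⊗[Fq] R)))) :
    I = Ideal.map (Algebra.TensorProduct.includeLeftRingHom : Λ →+* Λ ⊗[Fq] R)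
          (Ideal.comap (Algebra.TensorProduct.includeLeftRingHom : Λ →+* Λ ⊗[Fq] R) I) := by
  classical
  refine le_antisymm (fun x hx => ?_) Ideal.map_comap_le
  obtain ⟨B, S, b, hb, hbS⟩ := exists_adapted_basis
    ((I.comap (Algebra.TensorProduct.includeLeftRingHom : Λ →+* Λ ⊗[Fq] R)).restrictScalars Fq)
  let e : Λ ⊗[Fq] R ≃ₗ[Fq] (B →₀ R) := TensorProduct.equivFinsuppOfBasisLeft b
  have he : ∀ l r i, e (l ⊗ₜ r) i = b.repr l i • r :=
    TensorProduct.equivFinsuppOfBasisLeft_apply_tmul_apply b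
  have he_smul : ∀ (r : R) x, e ((1 ⊗ₜ r) * x) = r • e x := by
    intro r x
    induction x with
    | zero => simp
    | add x y hx hy => rw [mul_add, map_add, hx, hy, map_add, smul_add]
    | tmul l s => ext i; simp [he]
  have heF : ∀ x, e (F x) = coordFrob Fq R B (e x) := by
    intro x
    induction x with
    | zero => simp
    | add x y hx hy => rw [map_add, map_add, hx, hy, map_add, map_add]
    | tmul l s =>
      ext i
      rw [hF, he, coordFrob_apply, he, ← FiniteField.frobeniusAlgHom_apply Fq R,
        ← FiniteField.frobeniusAlgHom_apply Fq R, map_smul]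
  have hFI : ∀ y ∈ I, F y ∈ I := fun y hy => by
    rw [hgen]
    exact Ideal.subset_span ⟨y, hy, rfl⟩
  -- `I` in coordinates, as an `R`-submodule.
  let M : Submodule R (B →₀ R) :=
    { carrier := e '' I
      zero_mem' := ⟨0, I.zero_mem, map_zero e⟩
      add_mem' := by
        rintro _ _ ⟨x, hx, rfl⟩ ⟨y, hy, rfl⟩
        exact ⟨x + y, I.add_mem hx hy, map_add e x y⟩
      smul_mem' := by
        rintro r _ ⟨x, hx, rfl⟩
        exact ⟨_, I.mul_mem_left (1 ⊗ₜ r) hx, he_smul r x⟩ }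
  have hM : ∀ {x}, e x ∈ M ↔ x ∈ I := fun {x} =>
    ⟨fun ⟨y, hy, hyx⟩ => e.injective hyx ▸ hy, fun h => ⟨x, h, rfl⟩⟩
  have h1 : ∀ z ∈ M, coordFrob Fq R B z ∈ M := by
    rintro _ ⟨y, hy, rfl⟩
    rw [← heF]
    exact hM.2 (hFI y hy)
  have h2 : M ≤ Submodule.span R (coordFrob Fq R B '' M) := by
    rintro _ ⟨x, hx, rfl⟩
    rw [SetLike.mem_coe, hgen] at hx
    refine Submodule.closure_induction
      (p := fun x _ => e x ∈ Submodule.span R (coordFrob Fq R B '' M)) ?_ ?_ ?_ hx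
    · rw [map_zero]; exact zero_mem _
    · intro x y _ _ hx hy
      rw [map_add]; exact add_mem hx hy
    · rintro t _ ⟨y, hy, rfl⟩
      induction t with
      | zero => rw [zero_smul, map_zero]; exact zero_mem _
      | add s t hs ht => rw [add_smul, map_add]; exact add_mem hs ht
      | tmul l r =>
        -- `F` is `Λ`-linear, so only the scalar `r` has to be pulled out.
        have h : (l ⊗ₜ[Fq] r) • F y = (1 ⊗ₜ r) * F ((l ⊗ₜ 1) * y) := by
          rw [map_mul, hF, ← mul_assoc, smul_eq_mul]
          simp
        rw [h, he_smul, heF]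
        exact Submodule.smul_mem _ _
          (Submodule.subset_span ⟨_, hM.2 (I.mul_mem_left _ hy), rfl⟩)
  have h3 : ∀ i ∉ S, Finsupp.single i 1 ∈ M := by
    intro i hi
    have h : e (b i ⊗ₜ 1) = Finsupp.single i 1 := by
      ext j
      rw [he, Module.Basis.repr_self, Finsupp.single_apply, Finsupp.single_apply]
      split_ifs <;> simp
    rw [← h]
    exact hM.2 (hb i hi)
  have h4 : ∀ w : B →₀ Fq, (∀ i ∉ S, w i = 0) →
      w.mapRange (algebraMap Fq R) (map_zero _) ∈ M → w = 0 := by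
    intro w hw hwM
    refine hbS w hw ?_
    have h : e (w.linearCombination Fq b ⊗ₜ 1) = w.mapRange (algebraMap Fq R) (map_zero _) := by
      ext j
      rw [he, Module.Basis.repr_linearCombination, Finsupp.mapRange_apply,
        Algebra.algebraMap_eq_smul_one]
    rw [← h] at hwM
    exact hM.1 hwM
  have hx0 := coord_eq_zero S M h1 h2 h3 h4 (e x) (hM.2 hx)
  rw [← e.symm_apply_apply x, TensorProduct.equivFinsuppOfBasisLeft_symm_apply]
  refine Ideal.sum_mem _ fun i hi => ?_
  have hiS : i ∉ S := fun h => Finsupp.mem_support_iff.1 hi (hx0 i h)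
  have h : b i ⊗ₜ[Fq] (e x i) = (1 ⊗ₜ (e x i)) * (b i ⊗ₜ 1) := by simp
  change b i ⊗ₜ[Fq] (e x i) ∈ _
  rw [h]
  exact Ideal.mul_mem_left _ _ (Ideal.mem_map_of_mem _ (hb i hiS))
end

section
/- Let R be an Artinian local F_q-algebra with maximal ideal m and residue field k, equipped with a fixed F_q-algebra section k → R. Let Λ be an F_q-algebra and M a finitely presented Λ ⊗_{F_q} R-module equipped with an isomorphism φ : F*M → M where F is identity on Λ and the q-Frobenius on R. Then M is isomorphic as a Λ ⊗_{F_q} R-module to (M/mM) ⊗_k R. In particular M is free as an R-module. -/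
/-!
Write `S = Λ ⊗ R` and let `e : S → S` be the idempotent endomorphism `id ⊗ (s ∘ residue)`. The
maximal ideal of `R` is nilpotent, so for large `n` the power `r ^ (q ^ n)` depends only on the
residue class of `r` (`exists_pow_card_pow_eq`); as `s` commutes with Frobenius, this gives
`e ∘ F ^ n = F ^ n`. Iterating the unit structure, `M ≅ (F ^ n)^* M`, hence
`e^* M ≅ (e ∘ F ^ n)^* M = (F ^ n)^* M ≅ M` (`UniversalAlong.of_comp_eq`). Since `e` is the
composite of `S → Λ ⊗ k` with `G`, this says `M ≅ G^* (M / mM)`. Everything is carried out with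
universal properties rather than explicit tensor products.

Freeness over `R` follows because `Λ ⊗ R` is the pushout of `Λ ⊗ k` and `R` over `k`, so that
`M ≅ R ⊗[k] (M / mM)` with `k` a field (`IsBaseChangeAlong.free_right`).
-/

open TensorProduct

/-- `Restrict f M` is `M` viewed as an `A`-module via restriction of scalars along the
ring homomorphism `f : A →+* B`. -/
def Restrict {A B : Type} [CommRing A] [CommRing B] (_f : A →+* B) (M : Type) : Type := M

instance {A B : Type} [CommRing A] [CommRing B] (f : A →+* B) (M : Type) [AddCommGroup M] :
    AddCommGroup (Restrict f M) := inferInstanceAs (AddCommGroup M)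

instance {A B : Type} [CommRing A] [CommRing B] (f : A →+* B) (M : Type) [AddCommGroup M]
    [Module B M] : Module A (Restrict f M) := Module.compHom M f

/-- The identity map `Restrict f M → M`. -/
def Restrict.out {A B : Type} [CommRing A] [CommRing B] {f : A →+* B} {M : Type}
    (x : Restrict f M) : M := x

/-- `g : N →ₗ[A] Restrict f M` (an `f`-semilinear map `N → M`) exhibits the `B`-module `M`
as the base change of the `A`-module `N` along `f : A →+* B`: every `f`-semilinear map from
`N` to a `B`-module `Q` factors uniquely through `g` via a `B`-linear map `M → Q`.  This is
the universal property of `B ⊗_{A,f} N ≅ M`. -/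
def IsBaseChangeAlong {A B : Type} [CommRing A] [CommRing B] (f : A →+* B)
    {N M : Type} [AddCommGroup N] [Module A N] [AddCommGroup M] [Module B M]
    (g : N →ₗ[A] Restrict f M) : Prop :=
  ∀ (Q : Type) [AddCommGroup Q] [Module B Q] (h : N →ₗ[A] Restrict f Q),
    ∃! H : M →ₗ[B] Q, ∀ n : N, H ((g n).out) = (h n).out

/-- A version of `IsBaseChangeAlong` for additive maps between modules over one ring, so that
base changes along different endomorphisms of `S` can be compared and composed: `g` is
`f`-semilinear and universal among `f`-semilinear maps out of `M`. -/
def UniversalAlong {S : Type} [CommRing S] (f : S →+* S) {M M' : Type}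
    [AddCommGroup M] [Module S M] [AddCommGroup M'] [Module S M'] (g : M →+ M') : Prop :=
  (∀ a m, g (a • m) = f a • g m) ∧
  ∀ (Q : Type) [AddCommGroup Q] [Module S Q] (h : M →+ Q), (∀ a m, h (a • m) = f a • h m) →
    ∃! H : M' →ₗ[S] Q, ∀ m, H (g m) = h m

section Universal

variable {S : Type} [CommRing S] {M M' M'' : Type} [AddCommGroup M] [Module S M]
  [AddCommGroup M'] [Module S M'] [AddCommGroup M''] [Module S M'']

lemma UniversalAlong.id : UniversalAlong (RingHom.id S) (AddMonoidHom.id M) := by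
  refine ⟨fun _ _ => rfl, fun Q _ _ h hh => ⟨⟨h.toAddHom, hh⟩, fun _ => rfl, fun H hH => ?_⟩⟩
  ext m
  exact hH m

lemma UniversalAlong.comp {f f' : S →+* S} {g : M →+ M'} {g' : M' →+ M''}
    (hg : UniversalAlong f g) (hg' : UniversalAlong f' g') :
    UniversalAlong (f'.comp f) (g'.comp g) := by
  refine ⟨fun a m => ?_, fun Q _ _ h hh => ?_⟩
  · simp [hg.1, hg'.1]
  · let h₀ : M →+ Restrict f' Q := h
    obtain ⟨H₀, hH₀, hu₀⟩ := hg.2 (Restrict f' Q) h₀ hh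
    let h₁ : M' →+ Q := H₀.toAddMonoidHom
    have hh₁ : ∀ a m, h₁ (a • m) = f' a • h₁ m := fun a m => H₀.map_smul a m
    obtain ⟨H, hH, hu⟩ := hg'.2 Q h₁ hh₁
    refine ⟨H, fun m => (hH (g m)).trans (hH₀ m), fun H' hH' => hu H' fun m => ?_⟩
    let K : M' →ₗ[S] Restrict f' Q :=
      { toFun := fun m => H' (g' m)
        map_add' := fun x y => by simp; rfl
        map_smul' := fun a x => by
          rw [hg'.1, map_smul]; rfl }
    have hK : K = H₀ := hu₀ K fun m => hH' m
    exact congrArg (fun L : M' →ₗ[S] Restrict f' Q => L m) hK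

lemma UniversalAlong.iterate {f : S →+* S} {g : M →+ M} (hg : UniversalAlong f g) (n : ℕ) :
    ∃ g' : M →+ M, UniversalAlong (f ^ n) g' := by
  induction n with
  | zero => exact ⟨_, UniversalAlong.id⟩
  | succ n ih =>
    obtain ⟨g', hg'⟩ := ih
    exact ⟨_, hg.comp hg'⟩

/-- If `M` is a base change of itself along `f` and `e ∘ f = f`, then `M` is a base change of
itself along `e`: informally `e^* M ≅ e^* f^* M = (e ∘ f)^* M = f^* M ≅ M`. -/
lemma UniversalAlong.of_comp_eq {f e : S →+* S} {ψ : M →+ M} (hψ : UniversalAlong f ψ)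
    (hef : ∀ a, e (f a) = f a) : ∃ j : M →+ M, UniversalAlong e j := by
  -- As `e ∘ f = f`, the map `ψ` is also `f`-semilinear into `M` restricted along `e`.
  let ψ₀ : M →+ Restrict e M := ψ
  have hψ₀ : ∀ a m, ψ₀ (a • m) = f a • ψ₀ m := fun a m => by
    change ψ (a • m) = e (f a) • ψ m
    rw [hef, hψ.1]
  obtain ⟨j₀, hj₀, -⟩ := hψ.2 (Restrict e M) ψ₀ hψ₀
  let j : M →+ M := j₀.toAddMonoidHom
  have hjψ : ∀ m, j (ψ m) = ψ m := hj₀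
  have hj : ∀ a m, j (a • m) = e a • j m := fun a m => j₀.map_smul a m
  refine ⟨j, hj, fun Q _ _ h hh => ?_⟩
  obtain ⟨H, hH, hu⟩ := hψ.2 Q (h.comp ψ) fun a m => by
    simp [hψ.1, hh, hef]
  refine ⟨H, ?_, fun H' hH' => hu H' fun m => ?_⟩
  · -- `H ∘ j` and `h` are `S`-linear into `Q` restricted along `e` and agree after `ψ`.
    let K : M →ₗ[S] Restrict e Q :=
      { toFun := fun m => H (j m)
        map_add' := fun x y => by simp; rfl
        map_smul' := fun a x => by
          rw [hj, map_smul]; rfl }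
    let L : M →ₗ[S] Restrict e Q := { toFun := h, map_add' := h.map_add, map_smul' := hh }
    let h₀ : M →+ Restrict e Q := h.comp ψ
    obtain ⟨_, -, hu₀⟩ := hψ.2 (Restrict e Q) h₀ fun a m => by
      change h (ψ (a • m)) = e (f a) • h (ψ m)
      rw [hψ.1, hh]
    have hK := hu₀ K fun m => by
      change H (j (ψ m)) = h (ψ m)
      rw [hjψ]; exact hH m
    have hL := hu₀ L fun m => rfl
    intro m
    exact congrArg (fun T : M →ₗ[S] Restrict e Q => T m) (hK.trans hL.symm)
  · change H' (ψ m) = h (ψ m)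
    rw [← hH', hjψ]

end Universal

/-- In an Artinian local `F_q`-algebra, a high power of Frobenius only depends on the residue
class, since the maximal ideal is nilpotent. -/
lemma exists_pow_card_pow_eq (Fq : Type) [Field Fq] [Fintype Fq] (R : Type) [CommRing R]
    [Algebra Fq R] [IsArtinianRing R] [IsLocalRing R] :
    ∃ n : ℕ, ∀ x y : R, x - y ∈ IsLocalRing.maximalIdeal R →
      x ^ Fintype.card Fq ^ n = y ^ Fintype.card Fq ^ n := by
  obtain ⟨p, hp, k, hpp, hcard⟩ := FiniteField.card' (K := Fq)
  have : Fact p.Prime := ⟨hpp⟩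
  have : CharP R p := charP_of_injective_algebraMap (algebraMap Fq R).injective p
  obtain ⟨N, hN⟩ := IsArtinianRing.isNilpotent_jacobson_bot (R := R)
  rw [IsLocalRing.jacobson_eq_maximalIdeal _ bot_ne_top] at hN
  refine ⟨N, fun x y hxy => ?_⟩
  have h0 : (x - y) ^ N = 0 := by
    have := Ideal.pow_mem_pow hxy N
    rwa [hN] at this
  have h1 : (x - y) ^ Fintype.card Fq ^ N = 0 :=
    pow_eq_zero_of_le (Nat.lt_pow_self Fintype.one_lt_card).le h0
  rw [hcard, ← pow_mul, sub_pow_char_pow] at h1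
  rw [hcard, ← pow_mul]
  exact sub_eq_zero.mp h1

/-- If an `A`-linear map is universal for `IsBaseChangeAlong`, the target is the tensor product. -/
lemma IsBaseChangeAlong.nonempty_equiv {A B : Type} [CommRing A] [CommRing B] [Algebra A B]
    {N M : Type} [AddCommGroup N] [Module A N] [AddCommGroup M] [Module B M]
    {g : N →ₗ[A] Restrict (algebraMap A B) M} (hg : IsBaseChangeAlong (algebraMap A B) g) :
    Nonempty (B ⊗[A] N ≃ₗ[B] M) := by
  let h : N →ₗ[A] Restrict (algebraMap A B) (B ⊗[A] N) :=
    { toFun := fun n => (1 : B) ⊗ₜ[A] n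
      map_add' := fun x y => tmul_add _ _ _
      map_smul' := fun a x => by
        change (1 : B) ⊗ₜ[A] (a • x) = algebraMap A B a • (1 : B) ⊗ₜ[A] x
        rw [tmul_smul, algebraMap_smul] }
  obtain ⟨H, hH, -⟩ := hg _ h
  let _ : Module A M := Module.compHom M (algebraMap A B)
  have : IsScalarTower A B M := IsScalarTower.of_algebraMap_smul fun a m => rfl
  let g' : N →ₗ[A] M := { toFun := fun n => g n, map_add' := g.map_add, map_smul' := g.map_smul }
  let K : B ⊗[A] N →ₗ[B] M := g'.liftBaseChange B
  refine ⟨LinearEquiv.ofLinearMap K H ?_ ?_⟩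
  · obtain ⟨_, -, hu⟩ := hg M g
    refine (hu (K ∘ₗ H) fun n => ?_).trans (hu LinearMap.id fun n => rfl).symm
    rw [LinearMap.comp_apply, hH]
    change K ((1 : B) ⊗ₜ[A] n) = g' n
    simp [K]
  · ext n
    change H (K ((1 : B) ⊗ₜ[A] n)) = (1 : B) ⊗ₜ[A] n
    have : K ((1 : B) ⊗ₜ[A] n) = g' n := by simp [K]
    rw [this]
    exact hH n

/-- `Λ ⊗ R` is the pushout of `Λ ⊗ k` along `k → R`, so a module that is a base change along
`Λ ⊗ k → Λ ⊗ R` has the form `R ⊗[k] N` over `R`, hence is free. -/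
lemma IsBaseChangeAlong.free_right {Fq Λ k R : Type} [Field Fq] [CommRing Λ] [Algebra Fq Λ]
    [Field k] [Algebra Fq k] [CommRing R] [Algebra Fq R] (s : k →+* R)
    (hsFq : ∀ c : Fq, s (algebraMap Fq k c) = algebraMap Fq R c)
    (G : (Λ ⊗[Fq] k) →+* (Λ ⊗[Fq] R))
    (hG : ∀ (l : Λ) (x : k), G (l ⊗ₜ[Fq] x) = l ⊗ₜ[Fq] s x)
    {N M : Type} [AddCommGroup N] [Module (Λ ⊗[Fq] k) N]
    [AddCommGroup M] [Module (Λ ⊗[Fq] R) M]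
    {g : N →ₗ[Λ ⊗[Fq] k] Restrict G M} (hg : IsBaseChangeAlong G g) :
    Module.Free R (Restrict (Algebra.TensorProduct.includeRight :
        R →ₐ[Fq] Λ ⊗[Fq] R).toRingHom M) := by
  let _ : Algebra k R := s.toAlgebra
  have : IsScalarTower Fq k R := IsScalarTower.of_algebraMap_eq fun c => (hsFq c).symm
  let _ : Algebra (Λ ⊗[Fq] k) (Λ ⊗[Fq] R) := G.toAlgebra
  let _ : Algebra k (Λ ⊗[Fq] k) := Algebra.TensorProduct.rightAlgebra
  let _ : Algebra R (Λ ⊗[Fq] R) := Algebra.TensorProduct.rightAlgebra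
  let _ : Algebra k (Λ ⊗[Fq] R) := (G.comp (algebraMap k (Λ ⊗[Fq] k))).toAlgebra
  have : IsScalarTower k (Λ ⊗[Fq] k) (Λ ⊗[Fq] R) := IsScalarTower.of_algebraMap_eq fun _ => rfl
  have : IsScalarTower k R (Λ ⊗[Fq] R) := IsScalarTower.of_algebraMap_eq fun c => hG 1 c
  have : IsScalarTower Fq k (Λ ⊗[Fq] R) := IsScalarTower.of_algebraMap_eq fun c => by
    rw [IsScalarTower.algebraMap_apply k R, ← IsScalarTower.algebraMap_apply Fq k R]
    exact ((Algebra.TensorProduct.includeRight : R →ₐ[Fq] Λ ⊗[Fq] R).commutes c).symm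
  have h1 : IsBaseChange k (Algebra.TensorProduct.includeLeft :
      Λ →ₐ[Fq] Λ ⊗[Fq] k).toLinearMap :=
    (TensorProduct.isPushout' (R := Fq) (S := Λ) (T := k)).out
  have h2 : IsBaseChange R (Algebra.TensorProduct.includeLeft :
      Λ →ₐ[Fq] Λ ⊗[Fq] R).toLinearMap :=
    (TensorProduct.isPushout' (R := Fq) (S := Λ) (T := R)).out
  have : Algebra.IsPushout k R (Λ ⊗[Fq] k) (Λ ⊗[Fq] R) := by
    constructor
    refine IsBaseChange.of_comp h1 ?_
    have h3 : (((IsScalarTower.toAlgHom k (Λ ⊗[Fq] k) (Λ ⊗[Fq] R)).toLinearMap.restrictScalars Fq) ∘ₗ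
        (Algebra.TensorProduct.includeLeft : Λ →ₐ[Fq] Λ ⊗[Fq] k).toLinearMap) =
        (Algebra.TensorProduct.includeLeft : Λ →ₐ[Fq] Λ ⊗[Fq] R).toLinearMap :=
      LinearMap.ext fun l => (hG l 1).trans (by rw [map_one]; rfl)
    rw [← h3] at h2
    exact h2
  obtain ⟨e₁⟩ := IsBaseChangeAlong.nonempty_equiv (B := Λ ⊗[Fq] R) hg
  let _ : Module k N := Module.compHom N (algebraMap k (Λ ⊗[Fq] k))
  have : IsScalarTower k (Λ ⊗[Fq] k) N := IsScalarTower.of_algebraMap_smul fun _ _ => rfl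
  let e₂ := Algebra.IsPushout.cancelBaseChange k R (Λ ⊗[Fq] k) (Λ ⊗[Fq] R) N
  let e₃ : R ⊗[k] N ≃+ M := e₂.symm.toAddEquiv.trans e₁.toAddEquiv
  let e₄ : R ⊗[k] N ≃ₗ[R] Restrict (Algebra.TensorProduct.includeRight :
      R →ₐ[Fq] Λ ⊗[Fq] R).toRingHom M :=
    { e₃ with
      map_smul' := fun r x => by
        change e₁ (e₂.symm (r • x)) = (1 ⊗ₜ[Fq] r : Λ ⊗[Fq] R) • e₁ (e₂.symm x)
        rw [map_smul, ← map_smul e₁, ← algebraMap_smul (Λ ⊗[Fq] R) r]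
        rfl }
  exact Module.Free.of_equiv e₄

/-- **Unit modules over Artinian local rings are constant** (Lemma `flartin` (2)).
Let `R` be an Artinian local `F_q`-algebra with maximal ideal `m`, residue field `k`, and a
Cohen section `s : k → R`; let `Λ` be an `F_q`-algebra, `S = Λ ⊗[F_q] R`, and `F : S → S`
the Frobenius (`λ ⊗ r ↦ λ ⊗ r^q`). If `M` is a finitely presented `S`-module with a unit
structure (an isomorphism `F*M ≅ M`, encoded as an `F`-semilinear map `φ` exhibiting `M` as
a base change of itself along `F`), then `M ≅ (M/mM) ⊗_k R` as `S`-modules, i.e. `M` is the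
base change of `M/mM` along `G = id_Λ ⊗ s : Λ ⊗[F_q] k → Λ ⊗[F_q] R`.  In particular `M`
is free as an `R`-module. -/
theorem unit_module_over_artinian_local_is_constant
    (Fq : Type) [Field Fq] [Fintype Fq]
    (Λ : Type) [CommRing Λ] [Algebra Fq Λ]
    (R : Type) [CommRing R] [Algebra Fq R] [IsArtinianRing R] [IsLocalRing R]
    (s : IsLocalRing.ResidueField R →+* R)
    (hs : (IsLocalRing.residue R).comp s = RingHom.id (IsLocalRing.ResidueField R))
    (hsFq : ∀ c : Fq, s (IsLocalRing.residue R (algebraMap Fq R c)) = algebraMap Fq R c)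
    (F : (Λ ⊗[Fq] R) →+* (Λ ⊗[Fq] R))
    (hF : ∀ (l : Λ) (r : R), F (l ⊗ₜ[Fq] r) = l ⊗ₜ[Fq] (r ^ Fintype.card Fq))
    (G : (Λ ⊗[Fq] IsLocalRing.ResidueField R) →+* (Λ ⊗[Fq] R))
    (hG : ∀ (l : Λ) (x : IsLocalRing.ResidueField R), G (l ⊗ₜ[Fq] x) = l ⊗ₜ[Fq] s x)
    (M : Type) [AddCommGroup M] [Module (Λ ⊗[Fq] R) M]
    [Module.FinitePresentation (Λ ⊗[Fq] R) M]
    (φ : M →ₗ[Λ ⊗[Fq] R] Restrict F M) (hφ : IsBaseChangeAlong F φ) :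
    (∃ g : Restrict G
        (M ⧸ ((Ideal.map (Algebra.TensorProduct.includeRight :
                  R →ₐ[Fq] Λ ⊗[Fq] R).toRingHom (IsLocalRing.maximalIdeal R)) •
              (⊤ : Submodule (Λ ⊗[Fq] R) M)))
        →ₗ[Λ ⊗[Fq] IsLocalRing.ResidueField R] Restrict G M, IsBaseChangeAlong G g) ∧
    Module.Free R (Restrict (Algebra.TensorProduct.includeRight :
        R →ₐ[Fq] Λ ⊗[Fq] R).toRingHom M) := by
  let k := IsLocalRing.ResidueField R
  let I : Ideal (Λ ⊗[Fq] R) := Ideal.map (Algebra.TensorProduct.includeRight :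
    R →ₐ[Fq] Λ ⊗[Fq] R).toRingHom (IsLocalRing.maximalIdeal R)
  let res : (Λ ⊗[Fq] R) →+* (Λ ⊗[Fq] k) :=
    (Algebra.TensorProduct.map (AlgHom.id Fq Λ) (IsScalarTower.toAlgHom Fq R k)).toRingHom
  have hres : ∀ l r, res (l ⊗ₜ r) = l ⊗ₜ IsLocalRing.residue R r := fun l r => rfl
  have hs' : ∀ x, IsLocalRing.residue R (s x) = x := fun x => RingHom.congr_fun hs x
  have hresG : ∀ x, res (G x) = x := fun x => by
    induction x with
    | zero => simp
    | add x y hx hy => rw [map_add, map_add, hx, hy]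
    | tmul l x => rw [hG, hres, hs']
  let e : (Λ ⊗[Fq] R) →+* (Λ ⊗[Fq] R) := G.comp res
  have he : ∀ l r, e (l ⊗ₜ r) = l ⊗ₜ s (IsLocalRing.residue R r) := fun l r => by
    rw [RingHom.comp_apply, hres, hG]
  have hmem : ∀ r, r - s (IsLocalRing.residue R r) ∈ IsLocalRing.maximalIdeal R := fun r => by
    rw [← IsLocalRing.residue_eq_zero_iff, map_sub, hs', sub_self]
  have hsub : ∀ a, a - e a ∈ I := fun a => by
    induction a with
    | zero => simp
    | add x y hx hy => rw [map_add, add_sub_add_comm]; exact I.add_mem hx hy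
    | tmul l r =>
      have h1 : l ⊗ₜ[Fq] r - e (l ⊗ₜ r) =
          (l ⊗ₜ[Fq] (1 : R)) * ((1 : Λ) ⊗ₜ[Fq] (r - s (IsLocalRing.residue R r))) := by
        rw [he, ← tmul_sub, Algebra.TensorProduct.tmul_mul_tmul, mul_one, one_mul]
      rw [h1]
      exact I.mul_mem_left _ (Ideal.mem_map_of_mem _ (hmem r))
  have heI : ∀ a ∈ I, e a = 0 := by
    have : I ≤ RingHom.ker e := Ideal.map_le_iff_le_comap.mpr fun r hr => by
      change e ((1 : Λ) ⊗ₜ[Fq] r) = 0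
      rw [he, (IsLocalRing.residue_eq_zero_iff r).mpr hr, map_zero, tmul_zero]
    exact this
  have hFn : ∀ n l r, (F ^ n) (l ⊗ₜ[Fq] r) = l ⊗ₜ[Fq] (r ^ Fintype.card Fq ^ n) := fun n => by
    induction n with
    | zero => intro l r; simp
    | succ n ih =>
      intro l r
      rw [pow_succ, RingHom.mul_def, RingHom.comp_apply, hF, ih, ← pow_mul, pow_succ']
  obtain ⟨n, hn⟩ := exists_pow_card_pow_eq Fq R
  have heF : ∀ a, e ((F ^ n) a) = (F ^ n) a := fun a => by
    induction a with
    | zero => simp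
    | add x y hx hy => simp only [map_add, hx, hy]
    | tmul l r => rw [hFn, he, map_pow, map_pow, ← hn _ _ (hmem r)]
  let φ₀ : M →+ M := φ.toAddMonoidHom
  have hφ₀ : UniversalAlong F φ₀ :=
    ⟨fun a m => φ.map_smul a m, fun Q _ _ h hh =>
      hφ Q ({ toFun := h, map_add' := h.map_add, map_smul' := hh } :
        M →ₗ[Λ ⊗[Fq] R] Restrict F Q)⟩
  obtain ⟨ψ, hψ⟩ := hφ₀.iterate n
  obtain ⟨j, hj, hju⟩ := hψ.of_comp_eq heF
  let j₀ : M →ₗ[Λ ⊗[Fq] R] Restrict e M :=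
    { toFun := j, map_add' := j.map_add, map_smul' := hj }
  have hker : I • (⊤ : Submodule (Λ ⊗[Fq] R) M) ≤ LinearMap.ker j₀ :=
    Submodule.smul_le.mpr fun a ha m _ => by
      change j (a • m) = 0
      rw [hj, heI a ha, zero_smul]
  let g₀ := (I • (⊤ : Submodule (Λ ⊗[Fq] R) M)).liftQ j₀ hker
  let g : Restrict G (M ⧸ (I • (⊤ : Submodule (Λ ⊗[Fq] R) M))) →ₗ[Λ ⊗[Fq] k] Restrict G M :=
    { toFun := g₀
      map_add' := g₀.map_add
      map_smul' := fun x m => by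
        refine (g₀.map_smul (G x) m).trans ?_
        let v : M := g₀ m
        change G (res (G x)) • v = G x • v
        rw [hresG] }
  have hg : IsBaseChangeAlong G g := by
    intro Q _ _ h
    let mk := (I • (⊤ : Submodule (Λ ⊗[Fq] R) M)).mkQ
    let h₀ : (M ⧸ (I • (⊤ : Submodule (Λ ⊗[Fq] R) M))) →+ Q := h.toAddMonoidHom
    have hh₀ : ∀ x m, h₀ (G x • m) = G x • h₀ m := fun x m => h.map_smul x m
    -- `S` acts on `M / mM` through `e`, so `h` composed with `M → M / mM` is `e`-semilinear.
    obtain ⟨H, hH, hu⟩ := hju Q (h₀.comp mk.toAddMonoidHom) fun a m => by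
      have h1 : mk (a • m) = G (res a) • mk m := by
        rw [← map_smul, ← sub_eq_zero, ← map_sub, ← sub_smul]
        exact (Submodule.Quotient.mk_eq_zero _).mpr
          (Submodule.smul_mem_smul (hsub a) Submodule.mem_top)
      change h₀ (mk (a • m)) = G (res a) • h₀ (mk m)
      rw [h1, hh₀]
    refine ⟨H, fun x => ?_, fun H' hH' => hu H' fun m => hH' (mk m)⟩
    obtain ⟨m, rfl⟩ := Submodule.mkQ_surjective _ x
    exact hH m
  exact ⟨⟨g, hg⟩, hg.free_right s hsFq G hG⟩
end

section
/- Let R be a Noetherian local F_q-algebra with maximal ideal m, Λ an F_q-algebra of finite type over F_q, and M a finitely presented Λ ⊗_{F_q} R-module with an isomorphism φ : F*M ≅ M (F = identity on Λ, q-Frobenius on R). Then M is flat as an R-module. -/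
/-!
Forgetting `Λ`, the unit structure says that the `R`-module `M` is its own base change along the
`q`-Frobenius of `R`, because the square formed by `R → R` and `Λ ⊗ R → Λ ⊗ R` is a pushout
(`IsBaseChangeAlong.restrict`). Iterating, `M` is its own base change along `r ↦ r ^ (q ^ k)`.

Let `p` be a prime of `R`, `𝔪` the maximal ideal of `R_p` and `A = R_p ⧸ 𝔪 ^ k`. Since
`k ≤ q ^ k`, the map `R → A`, `r ↦ r ^ (q ^ k)`, factors through the residue field of `R_p`. Hence
`A ⊗ M` is the base change to `A` of a vector space, and so it is flat over `A`
(`IsBaseChangeAlong.flat_of_factor`).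

Flatness of `M` follows by the local criterion at every prime (`flat_of_flat_quotient_pow`). Here
`S = Λ ⊗ R` is Noetherian and `M` is finite over `S`. Let `x` be in the kernel of `I ⊗ M → M`, let
`P` be a maximal ideal of `S` and `p` its contraction. By Artin–Rees over `R_p`, `x` vanishes in
`(I ⊗ M)_p` modulo all powers of `p` (`mkQ_rTensor_eq_zero`), hence in `(I ⊗ M)_P` modulo all powers
of `P`. As `(I ⊗ M)_P` is finite over the Noetherian local ring `S_P`, Krull's intersection theorem
shows that `x` is zero there. All the primes `p` are needed, not just the maximal ideal of `R`,
since a maximal ideal of `S` may contract to any prime of `R`.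
-/

open TensorProduct

/-! ### Base change along a ring homomorphism -/

/-- The tensor product `B ⊗[A] N` has the universal property of the base change. -/
theorem isBaseChangeAlong_mk {A B : Type} [CommRing A] [CommRing B] [Algebra A B]
    (N : Type) [AddCommGroup N] [Module A N] :
    ∃ g : N →ₗ[A] Restrict (algebraMap A B) (B ⊗[A] N),
      IsBaseChangeAlong (algebraMap A B) g ∧ ∀ n, (g n).out = 1 ⊗ₜ[A] n := by
  refine ⟨{ toFun := fun n => (1 ⊗ₜ[A] n : B ⊗[A] N), map_add' := ?_, map_smul' := ?_ }, ?_, ?_⟩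
  · intro x y; exact TensorProduct.tmul_add _ _ _
  · intro a x
    change (1 : B) ⊗ₜ[A] (a • x) = algebraMap A B a • ((1 : B) ⊗ₜ[A] x)
    rw [algebraMap_smul, TensorProduct.tmul_smul]
  · intro Q _ _ h
    let : Module A Q := Module.compHom Q (algebraMap A B)
    have : IsScalarTower A B Q := IsScalarTower.of_algebraMap_smul fun _ _ => rfl
    let h' : N →ₗ[A] Q :=
      { toFun := fun n => (h n).out, map_add' := h.map_add, map_smul' := h.map_smul }
    refine ⟨h'.liftBaseChange B, fun n => ?_, fun H hH => ?_⟩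
    · exact (LinearMap.liftBaseChange_tmul B h' 1 n).trans (one_smul _ _)
    · apply LinearMap.restrictScalars_injective A
      apply TensorProduct.ext'
      intro b n
      have e : b ⊗ₜ[A] n = b • ((1 : B) ⊗ₜ[A] n) := by simp [TensorProduct.smul_tmul']
      have := hH n
      change H (1 ⊗ₜ[A] n) = _ at this
      simp only [LinearMap.restrictScalars_apply]
      rw [e, map_smul, map_smul, this]
      congr 1
      exact ((LinearMap.liftBaseChange_tmul B h' 1 n).trans (one_smul _ _)).symm
  · intro n; rfl

/-- Two base changes of the same module along the same map are isomorphic. -/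
theorem IsBaseChangeAlong.equiv {A B : Type} [CommRing A] [CommRing B] {f : A →+* B}
    {N M M' : Type} [AddCommGroup N] [Module A N] [AddCommGroup M] [Module B M]
    [AddCommGroup M'] [Module B M'] {g : N →ₗ[A] Restrict f M} {g' : N →ₗ[A] Restrict f M'}
    (hg : IsBaseChangeAlong f g) (hg' : IsBaseChangeAlong f g') :
    ∃ e : M ≃ₗ[B] M', ∀ n, e (g n).out = (g' n).out := by
  obtain ⟨u, hu, -⟩ := hg M' g'
  obtain ⟨v, hv, -⟩ := hg' M g
  have h1 : v ∘ₗ u = LinearMap.id := (hg M g).unique (fun n => by simp [hu, hv]) (fun n => rfl)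
  have h2 : u ∘ₗ v = LinearMap.id := (hg' M' g').unique (fun n => by simp [hu, hv]) (fun n => rfl)
  exact ⟨LinearEquiv.ofLinearMap u v h2 h1, hu⟩

theorem IsBaseChangeAlong.of_equiv {A B : Type} [CommRing A] [CommRing B] {f : A →+* B}
    {N M M' : Type} [AddCommGroup N] [Module A N] [AddCommGroup M] [Module B M]
    [AddCommGroup M'] [Module B M'] {g : N →ₗ[A] Restrict f M}
    (hg : IsBaseChangeAlong f g) (e : M ≃ₗ[B] M') :
    ∃ g' : N →ₗ[A] Restrict f M', IsBaseChangeAlong f g' := by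
  refine ⟨{ toFun := fun n => e (g n).out, map_add' := fun x y => ?_,
            map_smul' := fun a x => ?_ }, ?_⟩
  · rw [g.map_add]; exact e.map_add _ _
  · rw [g.map_smul]; exact e.map_smul (f a) _
  · intro Q _ _ h
    obtain ⟨H, hH, hu⟩ := hg Q h
    refine ⟨H ∘ₗ e.symm.toLinearMap, fun n => ?_, fun K hK => ?_⟩
    · refine Eq.trans ?_ (hH n)
      exact congrArg H (e.symm_apply_apply _)
    · have := hu (K ∘ₗ e.toLinearMap) hK
      rw [← this]; ext x; simp

/-- Transitivity of base change. -/
theorem IsBaseChangeAlong.comp {A B C : Type} [CommRing A] [CommRing B] [CommRing C]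
    {f : A →+* B} {f' : B →+* C} {N M L : Type} [AddCommGroup N] [Module A N] [AddCommGroup M]
    [Module B M] [AddCommGroup L] [Module C L]
    {g : N →ₗ[A] Restrict f M} {g' : M →ₗ[B] Restrict f' L}
    (hg : IsBaseChangeAlong f g) (hg' : IsBaseChangeAlong f' g') :
    ∃ k : N →ₗ[A] Restrict (f'.comp f) L, IsBaseChangeAlong (f'.comp f) k := by
  refine ⟨{ toFun := fun n => (g' (g n).out).out, map_add' := fun x y => ?_,
            map_smul' := fun a x => ?_ }, ?_⟩
  · rw [g.map_add]; exact g'.map_add _ _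
  · rw [g.map_smul]; exact g'.map_smul (f a) _
  · intro Q _ _ h
    let h' : N →ₗ[A] Restrict f (Restrict f' Q) :=
      { toFun := fun n => (h n).out, map_add' := h.map_add, map_smul' := h.map_smul }
    obtain ⟨H, hH, hu⟩ := hg (Restrict f' Q) h'
    obtain ⟨K, hK, hv⟩ := hg' Q H
    refine ⟨K, fun n => (hK _).trans (hH n), fun K' hK' => ?_⟩
    let H' : M →ₗ[B] Restrict f' Q :=
      { toFun := fun m => K' (g' m).out
        map_add' := fun x y => by rw [g'.map_add]; exact K'.map_add _ _
        map_smul' := fun b x => by rw [g'.map_smul]; exact K'.map_smul (f' b) _ }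
    have e : H' = H := hu H' hK'
    exact hv K' fun m => DFunLike.congr_fun e m

/-- Base change along `Λ ⊗ R → Λ ⊗ R'` is, after forgetting `Λ`, base change along `R → R'`. -/
theorem IsBaseChangeAlong.restrict {K Λ R R' : Type} [Field K] [CommRing Λ] [Algebra K Λ]
    [CommRing R] [Algebra K R] [CommRing R'] [Algebra K R'] (f : R →ₐ[K] R')
    (F : (Λ ⊗[K] R) →+* (Λ ⊗[K] R')) (hF : ∀ l r, F (l ⊗ₜ[K] r) = l ⊗ₜ[K] f r)
    {M M' : Type} [AddCommGroup M] [Module (Λ ⊗[K] R) M] [AddCommGroup M']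
    [Module (Λ ⊗[K] R') M'] {φ : M →ₗ[Λ ⊗[K] R] Restrict F M'} (hφ : IsBaseChangeAlong F φ) :
    ∃ ψ : Restrict (Algebra.TensorProduct.includeRight : R →ₐ[K] Λ ⊗[K] R).toRingHom M →ₗ[R]
      Restrict f.toRingHom
        (Restrict (Algebra.TensorProduct.includeRight : R' →ₐ[K] Λ ⊗[K] R').toRingHom M'),
      IsBaseChangeAlong f.toRingHom ψ := by
  let : Algebra R R' := f.toRingHom.toAlgebra
  let : Algebra R (Λ ⊗[K] R) := Algebra.TensorProduct.rightAlgebra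
  let : Algebra R' (Λ ⊗[K] R') := Algebra.TensorProduct.rightAlgebra
  let : Algebra (Λ ⊗[K] R) (Λ ⊗[K] R') := F.toAlgebra
  let : Algebra R (Λ ⊗[K] R') := ((algebraMap R' (Λ ⊗[K] R')).comp (algebraMap R R')).toAlgebra
  have : IsScalarTower K R R' := IsScalarTower.of_algebraMap_eq fun x => (f.commutes x).symm
  have : IsScalarTower R R' (Λ ⊗[K] R') := IsScalarTower.of_algebraMap_eq fun x => rfl
  have : IsScalarTower R (Λ ⊗[K] R) (Λ ⊗[K] R') := IsScalarTower.of_algebraMap_eq fun x =>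
    (hF 1 x).symm
  have : IsScalarTower Λ (Λ ⊗[K] R) (Λ ⊗[K] R') := IsScalarTower.of_algebraMap_eq fun x => by
    change x ⊗ₜ[K] (1 : R') = F (x ⊗ₜ[K] (1 : R))
    rw [hF, map_one]
  have : IsScalarTower K (Λ ⊗[K] R) (Λ ⊗[K] R') := IsScalarTower.of_algebraMap_eq fun x => by
    rw [IsScalarTower.algebraMap_apply K Λ (Λ ⊗[K] R), ← IsScalarTower.algebraMap_apply Λ,
      ← IsScalarTower.algebraMap_apply K Λ]
  have : Algebra.IsPushout R R' (Λ ⊗[K] R) (Λ ⊗[K] R') :=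
    (Algebra.IsPushout.comp_iff K R Λ (Λ ⊗[K] R) (T := R') (T' := Λ ⊗[K] R')).1 inferInstance
  let : Module R M := Module.compHom M
    (Algebra.TensorProduct.includeRight : R →ₐ[K] Λ ⊗[K] R).toRingHom
  have : IsScalarTower R (Λ ⊗[K] R) M := IsScalarTower.of_algebraMap_smul fun _ _ => rfl
  obtain ⟨g, hg, -⟩ := isBaseChangeAlong_mk (A := Λ ⊗[K] R) (B := Λ ⊗[K] R') M
  obtain ⟨e, -⟩ := hg.equiv hφ
  let e1 := (Algebra.IsPushout.cancelBaseChange R R' (Λ ⊗[K] R) (Λ ⊗[K] R') M).symm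
  let e2 : (Λ ⊗[K] R') ⊗[Λ ⊗[K] R] M ≃ₗ[R'] Restrict
      (Algebra.TensorProduct.includeRight : R' →ₐ[K] Λ ⊗[K] R').toRingHom M' :=
    { e with
      map_smul' := fun r x => by
        change e (r • x) = (1 ⊗ₜ[K] r : Λ ⊗[K] R') • e x
        rw [← e.map_smul, ← algebraMap_smul (Λ ⊗[K] R')]
        rfl }
  obtain ⟨g0, hg0, -⟩ := isBaseChangeAlong_mk (A := R) (B := R') M
  exact hg0.of_equiv (e1.trans e2)

theorem IsBaseChangeAlong.iterate {R : Type} [CommRing R] {f : R →+* R} {M : Type}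
    [AddCommGroup M] [Module R M] {g : M →ₗ[R] Restrict f M} (hg : IsBaseChangeAlong f g) (n : ℕ) :
    ∃ k : M →ₗ[R] Restrict (f ^ n) M, IsBaseChangeAlong (f ^ n) k := by
  induction n with
  | zero =>
    refine ⟨{ toFun := fun m => (m : M), map_add' := fun _ _ => rfl,
              map_smul' := fun _ _ => rfl }, fun Q _ _ h => ?_⟩
    refine ⟨{ toFun := fun m => (h m).out, map_add' := h.map_add, map_smul' := h.map_smul },
      fun _ => rfl, fun H hH => ?_⟩
    ext m
    exact hH m
  | succ n ih =>
    obtain ⟨k, hk⟩ := ih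
    rw [pow_succ']
    exact hk.comp hg

/-- If `M` is its own base change along `f` and `R → R → A` (the first map being `f`) factors
through a field, then `A ⊗[R] M` is the base change of a vector space, hence flat. -/
theorem IsBaseChangeAlong.flat_of_factor {R A k : Type} [CommRing R] [CommRing A] [Field k]
    [Algebra R A] {f : R →+* R} {M : Type} [AddCommGroup M] [Module R M]
    {g : M →ₗ[R] Restrict f M} (hg : IsBaseChangeAlong f g) (c : R →+* k) (b : k →+* A)
    (hbc : (algebraMap R A).comp f = b.comp c) : Module.Flat A (A ⊗[R] M) := by
  let : Algebra R k := c.toAlgebra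
  let : Algebra k A := b.toAlgebra
  obtain ⟨j, hj, -⟩ := isBaseChangeAlong_mk (A := R) (B := A) M
  obtain ⟨u, hu, -⟩ := isBaseChangeAlong_mk (A := R) (B := k) M
  obtain ⟨v, hv, -⟩ := isBaseChangeAlong_mk (A := k) (B := A) (k ⊗[R] M)
  obtain ⟨x, hx⟩ := hg.comp hj
  obtain ⟨y, hy⟩ := hu.comp hv
  have key : ∀ (h : R →+* A), h = b.comp c → ∀ (x : M →ₗ[R] Restrict h (A ⊗[R] M)),
      IsBaseChangeAlong h x → Nonempty (A ⊗[R] M ≃ₗ[A] A ⊗[k] (k ⊗[R] M)) := by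
    rintro _ rfl x hx
    obtain ⟨e, -⟩ := hx.equiv hy
    exact ⟨e⟩
  obtain ⟨e⟩ := key _ hbc x hx
  exact Module.Flat.of_linearEquiv e

/-! ### The local criterion of flatness -/

/-- A flat `A`-module of the form `A ⊗[R] M` makes `- ⊗[R] M` exact on `A`-modules. -/
theorem rTensor_injective_of_flat_baseChange {R A M N N' : Type} [CommRing R] [CommRing A]
    [Algebra R A] [AddCommGroup M] [Module R M] [Module.Flat A (A ⊗[R] M)]
    [AddCommGroup N] [Module R N] [Module A N] [IsScalarTower R A N]
    [AddCommGroup N'] [Module R N'] [Module A N'] [IsScalarTower R A N']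
    (f : N →ₗ[A] N') (hf : Function.Injective f) :
    Function.Injective ((f.restrictScalars R).rTensor M) := by
  have h := Module.Flat.rTensor_preserves_injective_linearMap (M := A ⊗[R] M) f hf
  let e := TensorProduct.AlgebraTensorModule.cancelBaseChange R A A N M
  let e' := TensorProduct.AlgebraTensorModule.cancelBaseChange R A A N' M
  have key : ∀ x, (f.restrictScalars R).rTensor M x = e' (f.rTensor (A ⊗[R] M) (e.symm x)) := by
    intro x
    induction x with
    | zero => simp
    | add x y hx hy => simp only [map_add, hx, hy]
    | tmul n m => simp [e, e']
  intro x y hxy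
  rw [key, key] at hxy
  exact e.symm.injective (h (e'.injective hxy))

/-- Artin–Rees form of the local criterion: if all `(T ⧸ J ^ k) ⊗[R] M` are flat, then the kernel
of `N ⊗[R] M → N' ⊗[R] M` dies modulo every power of `J`, for `N → N'` injective and `N'` finite. -/
theorem mkQ_rTensor_eq_zero {R T M N N' : Type} [CommRing R] [CommRing T] [IsNoetherianRing T]
    [Algebra R T] [AddCommGroup M] [Module R M] (J : Ideal T)
    (hM : ∀ k, Module.Flat (T ⧸ J ^ k) ((T ⧸ J ^ k) ⊗[R] M))
    [AddCommGroup N] [Module R N] [Module T N] [IsScalarTower R T N]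
    [AddCommGroup N'] [Module R N'] [Module T N'] [IsScalarTower R T N'] [Module.Finite T N']
    (f : N →ₗ[T] N') (hf : Function.Injective f) (x : N ⊗[R] M)
    (hx : (f.restrictScalars R).rTensor M x = 0) (n : ℕ) :
    ((J ^ n • ⊤ : Submodule T N).mkQ.restrictScalars R).rTensor M x = 0 := by
  obtain ⟨k, hk⟩ := J.exists_pow_inf_eq_pow_smul (LinearMap.range f)
  have hk := hk (k + n) (by omega)
  set W : Submodule T N' := J ^ (k + n) • ⊤ with hW
  -- `N ⧸ E` embeds into `N' ⧸ W`, and both are modules over `T ⧸ J ^ (k + n)`.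
  set E : Submodule T N := W.comap f with hE
  have hEle : E ≤ J ^ n • ⊤ := by
    intro y hy
    have h1 : f y ∈ J ^ (k + n) • ⊤ ⊓ LinearMap.range f := ⟨hy, y, rfl⟩
    rw [hk, Nat.add_sub_cancel_left] at h1
    have h2 : f y ∈ (J ^ n • ⊤ : Submodule T N).map f := by
      rw [Submodule.map_smul'', Submodule.map_top]
      exact Submodule.smul_mono le_rfl inf_le_right h1
    obtain ⟨z, hz, hzy⟩ := h2
    rwa [← hf hzy]
  have htors : ∀ a ∈ J ^ (k + n), ∀ v : N' ⧸ W, a • v = 0 := by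
    intro a ha v
    obtain ⟨v, rfl⟩ := W.mkQ_surjective v
    rw [← map_smul, Submodule.mkQ_apply, Submodule.Quotient.mk_eq_zero]
    exact Submodule.smul_mem_smul ha trivial
  have htors' : ∀ a ∈ J ^ (k + n), ∀ v : N ⧸ E, a • v = 0 := by
    intro a ha v
    obtain ⟨v, rfl⟩ := E.mkQ_surjective v
    rw [← map_smul, Submodule.mkQ_apply, Submodule.Quotient.mk_eq_zero]
    change f (a • v) ∈ W
    rw [map_smul]
    exact Submodule.smul_mem_smul ha trivial
  let F : N ⧸ E →ₗ[T] N' ⧸ W := E.mapQ W f le_rfl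
  have hF : Function.Injective F := by
    rw [← LinearMap.ker_eq_bot, Submodule.ker_mapQ, ← hE, Submodule.mkQ_map_self]
  have tN : Module.IsTorsionBySet T (N ⧸ E) (J ^ (k + n) : Ideal T) := fun v a => htors' a a.2 v
  have tN' : Module.IsTorsionBySet T (N' ⧸ W) (J ^ (k + n) : Ideal T) := fun v a => htors a a.2 v
  let : Module (T ⧸ J ^ (k + n)) (N ⧸ E) := tN.module
  let : Module (T ⧸ J ^ (k + n)) (N' ⧸ W) := tN'.module
  have : IsScalarTower R (T ⧸ J ^ (k + n)) (N ⧸ E) := tN.isScalarTower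
  have : IsScalarTower R (T ⧸ J ^ (k + n)) (N' ⧸ W) := tN'.isScalarTower
  let FA : N ⧸ E →ₗ[T ⧸ J ^ (k + n)] N' ⧸ W :=
    { toFun := F
      map_add' := F.map_add
      map_smul' := fun a v => by
        obtain ⟨a, rfl⟩ := Ideal.Quotient.mk_surjective a
        exact F.map_smul a v }
  have := hM (k + n)
  have hinj := rTensor_injective_of_flat_baseChange (R := R) (M := M) FA hF
  have h0 : (E.mkQ.restrictScalars R).rTensor M x = 0 := by
    apply hinj
    rw [map_zero, ← LinearMap.comp_apply, ← LinearMap.rTensor_comp]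
    have e : FA.restrictScalars R ∘ₗ E.mkQ.restrictScalars R =
        W.mkQ.restrictScalars R ∘ₗ f.restrictScalars R := by
      ext y; rfl
    rw [e, LinearMap.rTensor_comp, LinearMap.comp_apply, hx, map_zero]
  have e : (J ^ n • ⊤ : Submodule T N).mkQ.restrictScalars R =
      (Submodule.factor hEle).restrictScalars R ∘ₗ E.mkQ.restrictScalars R := by
    ext y; rfl
  rw [e, LinearMap.rTensor_comp, LinearMap.comp_apply, h0, map_zero]

/-- A bilinear map `β` into a `T`-module `G` sends a tensor which dies in
`(A ⊗ I) ⧸ J ^ n (A ⊗ I) ⊗ M` into `K ^ n • G`, for every `A`-algebra `T` with `J T ⊆ K`. -/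
theorem lift_mem_pow_smul {R A T M I G : Type} [CommRing R] [CommRing A] [CommRing T]
    [Algebra R A] [Algebra A T] [Algebra R T] [IsScalarTower R A T]
    [AddCommGroup M] [Module R M] [AddCommGroup I] [Module R I]
    [AddCommGroup G] [Module R G] [Module T G] [IsScalarTower R T G]
    (J : Ideal A) (K : Ideal T) (hJK : J.map (algebraMap A T) ≤ K) (n : ℕ)
    (β : I →ₗ[R] M →ₗ[R] G) (x : I ⊗[R] M)
    (hx : ((J ^ n • ⊤ : Submodule A (A ⊗[R] I)).mkQ.restrictScalars R).rTensor M
      ((TensorProduct.mk R A I 1).rTensor M x) = 0) :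
    TensorProduct.lift β x ∈ (K ^ n • ⊤ : Submodule T G) := by
  let q : G →ₗ[R] G ⧸ (K ^ n • ⊤ : Submodule T G) :=
    (Submodule.mkQ (K ^ n • ⊤ : Submodule T G)).restrictScalars R
  let : Module A (G ⧸ (K ^ n • ⊤ : Submodule T G)) := Module.compHom _ (algebraMap A T)
  have : IsScalarTower A T (G ⧸ (K ^ n • ⊤ : Submodule T G)) :=
    IsScalarTower.of_algebraMap_smul fun _ _ => rfl
  have : IsScalarTower R A (G ⧸ (K ^ n • ⊤ : Submodule T G)) :=
    IsScalarTower.of_algebraMap_smul fun r y => by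
      rw [← algebraMap_smul T (algebraMap R A r) y, ← IsScalarTower.algebraMap_apply,
        algebraMap_smul]
  -- `γ (a ⊗ i) m` is `a • β i m` modulo `K ^ n`.
  let γ : A ⊗[R] I →ₗ[A] (M →ₗ[R] G ⧸ (K ^ n • ⊤ : Submodule T G)) :=
    LinearMap.liftBaseChange A (β.compr₂ q)
  have hγ : (J ^ n • ⊤ : Submodule A (A ⊗[R] I)) ≤ LinearMap.ker γ := by
    rw [Submodule.smul_le]
    intro a ha y _
    rw [LinearMap.mem_ker, map_smul]
    ext m
    obtain ⟨z, hz⟩ := Submodule.mkQ_surjective (K ^ n • ⊤ : Submodule T G) (γ y m)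
    rw [LinearMap.smul_apply, LinearMap.zero_apply, ← hz]
    change algebraMap A T a • (Submodule.mkQ (K ^ n • ⊤ : Submodule T G)) z = 0
    rw [← map_smul, Submodule.mkQ_apply, Submodule.Quotient.mk_eq_zero]
    refine Submodule.smul_mem_smul (Ideal.pow_right_mono hJK n ?_) trivial
    rw [← Ideal.map_pow]
    exact Ideal.mem_map_of_mem _ ha
  let δ := Submodule.liftQ _ γ hγ
  have key : TensorProduct.lift (δ.restrictScalars R) ∘ₗ
      ((J ^ n • ⊤ : Submodule A (A ⊗[R] I)).mkQ.restrictScalars R).rTensor M ∘ₗ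
      (TensorProduct.mk R A I 1).rTensor M = q ∘ₗ TensorProduct.lift β := by
    apply TensorProduct.ext'
    intro i m
    simp [δ, γ, q]
  have h := LinearMap.congr_fun key x
  simp only [LinearMap.comp_apply] at h
  rw [hx, map_zero] at h
  exact (Submodule.Quotient.mk_eq_zero _).1 h.symm

/-- Local criterion of flatness, at all primes of `R` at once, for a module finite over a
Noetherian `R`-algebra `S`. -/
theorem flat_of_flat_quotient_pow {R S M : Type} [CommRing R] [IsNoetherianRing R] [CommRing S]
    [IsNoetherianRing S] [Algebra R S] [AddCommGroup M] [Module R M] [Module S M]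
    [IsScalarTower R S M] [Module.Finite S M]
    (hM : ∀ (p : Ideal R) [p.IsPrime] (k : ℕ),
      Module.Flat (Localization.AtPrime p ⧸ IsLocalRing.maximalIdeal (Localization.AtPrime p) ^ k)
        ((Localization.AtPrime p ⧸ IsLocalRing.maximalIdeal (Localization.AtPrime p) ^ k)
          ⊗[R] M)) : Module.Flat R M := by
  rw [Module.Flat.iff_rTensor_injective]
  intro I _
  rw [← LinearMap.ker_eq_bot, LinearMap.ker_eq_bot']
  intro x hx
  -- The `S`-module structure lives on `M ⊗[R] I`, where `S` acts on the left factor.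
  apply (TensorProduct.comm R I M).injective
  rw [map_zero]
  refine Module.eq_zero_of_localization_maximal (R := S)
    (fun P _ => Localization.AtPrime P ⊗[S] (M ⊗[R] I))
    (fun P _ => TensorProduct.mk S (Localization.AtPrime P) (M ⊗[R] I) 1) _ fun P hP => ?_
  let p := P.comap (algebraMap R S)
  let Rp := Localization.AtPrime p
  let T := Localization.AtPrime P
  let : Algebra Rp T := (Localization.localRingHom p P (algebraMap R S) rfl).toAlgebra
  have : IsScalarTower R Rp T := IsScalarTower.of_algebraMap_eq fun r => by
    refine (IsScalarTower.algebraMap_apply R S T r).trans ?_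
    exact (Localization.localRingHom_to_map p P (algebraMap R S) rfl r).symm
  have : IsNoetherianRing Rp := IsLocalization.isNoetherianRing p.primeCompl _ inferInstance
  have : IsNoetherianRing T := IsLocalization.isNoetherianRing P.primeCompl _ inferInstance
  have hloc : IsLocalHom (algebraMap Rp T) :=
    Localization.isLocalHom_localRingHom p P (algebraMap R S) rfl
  have : Module.Finite S (M ⊗[R] I) := Module.Finite.equiv
    (TensorProduct.AlgebraTensorModule.cancelBaseChange R S S M I)
  let β : I →ₗ[R] M →ₗ[R] T ⊗[S] (M ⊗[R] I) :=
    (TensorProduct.mk R M I).flip.compr₂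
      ((TensorProduct.mk S T (M ⊗[R] I) 1).restrictScalars R)
  have hβ : TensorProduct.lift β x =
      TensorProduct.mk S T (M ⊗[R] I) 1 (TensorProduct.comm R I M x) := by
    have : TensorProduct.lift β = ((TensorProduct.mk S T (M ⊗[R] I) 1).restrictScalars R) ∘ₗ
        (TensorProduct.comm R I M).toLinearMap := by
      apply TensorProduct.ext'
      intro i m
      simp [β]
    rw [this]; rfl
  change TensorProduct.mk S T (M ⊗[R] I) 1 (TensorProduct.comm R I M x) = 0
  rw [← hβ, ← Submodule.mem_bot T, ← Ideal.iInf_pow_smul_eq_bot_of_isLocalRing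
    (IsLocalRing.maximalIdeal T) (Ideal.IsPrime.ne_top inferInstance), Submodule.mem_iInf]
  intro n
  refine lift_mem_pow_smul (IsLocalRing.maximalIdeal Rp) _
    (((IsLocalRing.local_hom_TFAE (algebraMap Rp T)).out 0 2).1 hloc) n β x ?_
  refine mkQ_rTensor_eq_zero (T := Rp) _ (hM p)
    (TensorProduct.AlgebraTensorModule.lTensor Rp Rp I.subtype)
    (Module.Flat.lTensor_preserves_injective_linearMap (M := Rp) I.subtype
      Subtype.val_injective) _ ?_ n
  have e : ((TensorProduct.AlgebraTensorModule.lTensor Rp Rp I.subtype).restrictScalars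
      R).rTensor M ∘ₗ (TensorProduct.mk R Rp I 1).rTensor M =
      (TensorProduct.mk R Rp R 1).rTensor M ∘ₗ I.subtype.rTensor M := by
    rw [← LinearMap.rTensor_comp, ← LinearMap.rTensor_comp]
    rfl
  refine (LinearMap.congr_fun e x).trans ?_
  rw [LinearMap.comp_apply, hx, map_zero]

/-- **Local case of the flatness theorem** (Theorem `katzflat`). Let `R` be a Noetherian
local `F_q`-algebra, `Λ` an `F_q`-algebra of finite type, `S = Λ ⊗[F_q] R`, and `F : S → S`
the Frobenius (`λ ⊗ r ↦ λ ⊗ r^q`). If `M` is a finitely presented `S`-module with a unit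
structure (an isomorphism `φ : F*M ≅ M`), then `M` is flat as an `R`-module. -/
theorem unit_module_flat_over_local_base
    (Fq : Type) [Field Fq] [Fintype Fq]
    (Λ : Type) [CommRing Λ] [Algebra Fq Λ] (hΛ : Algebra.FiniteType Fq Λ)
    (R : Type) [CommRing R] [Algebra Fq R] [IsNoetherianRing R] [IsLocalRing R]
    (F : (Λ ⊗[Fq] R) →+* (Λ ⊗[Fq] R))
    (hF : ∀ (l : Λ) (r : R), F (l ⊗ₜ[Fq] r) = l ⊗ₜ[Fq] (r ^ Fintype.card Fq))
    (M : Type) [AddCommGroup M] [Module (Λ ⊗[Fq] R) M]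
    [Module.FinitePresentation (Λ ⊗[Fq] R) M]
    (φ : M →ₗ[Λ ⊗[Fq] R] Restrict F M) (hφ : IsBaseChangeAlong F φ) :
    Module.Flat R (Restrict (Algebra.TensorProduct.includeRight :
        R →ₐ[Fq] Λ ⊗[Fq] R).toRingHom M) := by
  obtain ⟨ψ, hψ⟩ := hφ.restrict (FiniteField.frobeniusAlgHom Fq R) F (by simpa using hF)
  let : Algebra R (Λ ⊗[Fq] R) := Algebra.TensorProduct.rightAlgebra
  let : Module (Λ ⊗[Fq] R) (Restrict (Algebra.TensorProduct.includeRight :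
        R →ₐ[Fq] Λ ⊗[Fq] R).toRingHom M) := inferInstanceAs (Module (Λ ⊗[Fq] R) M)
  have : Module.Finite (Λ ⊗[Fq] R) (Restrict (Algebra.TensorProduct.includeRight :
        R →ₐ[Fq] Λ ⊗[Fq] R).toRingHom M) := inferInstanceAs (Module.Finite (Λ ⊗[Fq] R) M)
  have : IsScalarTower R (Λ ⊗[Fq] R) (Restrict (Algebra.TensorProduct.includeRight :
        R →ₐ[Fq] Λ ⊗[Fq] R).toRingHom M) := IsScalarTower.of_algebraMap_smul fun _ _ => rfl
  have : IsNoetherianRing (Λ ⊗[Fq] R) := by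
    have h : Algebra.FiniteType R (R ⊗[Fq] Λ) := inferInstance
    have := Algebra.FiniteType.isNoetherianRing R (R ⊗[Fq] Λ)
    exact isNoetherianRing_of_ringEquiv _ (Algebra.TensorProduct.comm Fq R Λ).toRingEquiv
  refine flat_of_flat_quotient_pow (S := Λ ⊗[Fq] R) fun p _ k => ?_
  obtain ⟨g, hg⟩ := IsBaseChangeAlong.iterate hψ k
  let m := IsLocalRing.maximalIdeal (Localization.AtPrime p)
  let Φ : Localization.AtPrime p →+* Localization.AtPrime p :=
    (FiniteField.frobeniusAlgHom Fq (Localization.AtPrime p)).toRingHom ^ k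
  have hpow : ∀ (A : Type) [CommRing A] [Algebra Fq A] (x : A),
      ((FiniteField.frobeniusAlgHom Fq A).toRingHom ^ k) x = x ^ Fintype.card Fq ^ k := by
    intro A _ _ x
    rw [RingHom.coe_pow]
    exact congrFun (pow_iterate (Fintype.card Fq) k) x
  -- `x ↦ x ^ (q ^ k)` kills `m` modulo `m ^ k`, so it descends to the residue field.
  let b : IsLocalRing.ResidueField (Localization.AtPrime p) →+* Localization.AtPrime p ⧸ m ^ k :=
    Ideal.Quotient.lift m ((Ideal.Quotient.mk (m ^ k)).comp Φ) fun a ha => by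
      rw [RingHom.comp_apply, Ideal.Quotient.eq_zero_iff_mem, hpow]
      exact Ideal.pow_le_pow_right (Nat.lt_pow_self Fintype.one_lt_card).le
        (Ideal.pow_mem_pow ha _)
  refine hg.flat_of_factor ((IsLocalRing.residue _).comp (algebraMap R _)) b ?_
  ext r
  change Ideal.Quotient.mk (m ^ k) (algebraMap R _ _) =
    Ideal.Quotient.mk (m ^ k) (Φ (algebraMap R _ r))
  rw [hpow, hpow, map_pow]
end

section
/- Let R be an F_q-algebra, Λ a field containing F_q with R ⊗_{F_q} Λ viewed as a coherent ring when R is Noetherian. Suppose X = Spec R is connected Noetherian and M is a finitely generated Λ ⊗_{F_q} R-module with an isomorphism φ : F*M ≅ M. Then M is a finitely presented flat, hence locally free (projective), Λ ⊗_{F_q} R-module. -/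
/-!
Write `S = Λ ⊗ R`, choose a surjection `S ^ n → M` with kernel `K`, and let `I_k` be the ideal of
`k × k` minors of `K`, which is the `(n - k)`-th Fitting ideal of `M`. As `S` need not be
Noetherian, `K` need not be finitely generated, and `I_k` uses arbitrary `k`-tuples in `K`.

* Fitting ideals do not depend on the chosen generators (`minorIdeal_ker_eq`). The images under
  `φ` of the generators of `M` generate `M` too, and their relations are spanned by the
  `F`-twists of the relations in `K` (`presentation_pullback`). Hence `I_k = F(I_k) S`.
* An ideal `I` with `I = F(I) S` is `0` or `S` (`invariant_ideal_eq_bot_or_top`). Fix an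
  `F_q`-basis of `Λ` and let `J ⊆ R` be the ideal generated by the coordinates of the elements
  of `I`. Since `F` raises coordinates to the `q`-th power, `J ⊆ J ^ q ⊆ J ^ 2`, so `J` is generated
  by an idempotent and is `0` or `R`. If `J = R` and `I` lies in a maximal ideal `P` over `p ⊂ R`,
  take `s ∈ I` with as few coordinates outside `p` as possible (but at least one), and let `c` be
  one of them. The element `F s - c ^ (q - 1) s` of `I` has fewer, hence none; so modulo `p` all
  coordinates of `s` are `F_q`-multiples of `c`, that is `s ≡ l ⊗ c` modulo `P` with `l ∈ Λ`
  nonzero. This forces `c ∈ p`, a contradiction.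
* So there is `k` with `I_k = S` and `I_{k+1} = 0`. Expanding the vanishing `(k + 1)`-minors gives,
  for `x_1, …, x_k ∈ K` and linear forms `g_j`, an endomorphism of `S ^ n` with image in `K` that
  acts on `K` as multiplication by `det (g_j x_i)`. A linear combination of these is a projection
  onto `K` (`exists_projection_of_minorIdeal`), so `M = S ^ n / K` is projective.
-/

open TensorProduct

/-! ### Minor ideals and Fitting's lemma -/

theorem multilinear_mem_of_span {S ι N : Type*} [CommRing S] [Fintype ι]
    [AddCommGroup N] [Module S N] (f : MultilinearMap S (fun _ : ι => N) S)
    (X : Set N) (T : Ideal S) (h : ∀ v : ι → N, (∀ i, v i ∈ X) → f v ∈ T)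
    (v : ι → N) (hv : ∀ i, v i ∈ Submodule.span S X) : f v ∈ T := by
  classical
  -- Induction on the set of positions whose entry is only known to lie in the span.
  suffices H : ∀ (s : Finset ι) (v : ι → N), (∀ i, v i ∈ Submodule.span S X) →
      (∀ i, i ∉ s → v i ∈ X) → f v ∈ T from H Finset.univ v hv (by simp)
  intro s
  induction s using Finset.induction_on with
  | empty => intro v _ h'; exact h v fun i => h' i (by simp)
  | insert a s ha ih =>
    intro v hv h'
    suffices H : ∀ y ∈ Submodule.span S X, f (Function.update v a y) ∈ T by
      simpa using H (v a) (hv a)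
    intro y hy
    induction hy using Submodule.span_induction with
    | mem y hy =>
      apply ih
      · intro i
        by_cases hi : i = a
        · subst hi; simpa using Submodule.subset_span hy
        · simpa [hi] using hv i
      · intro i his
        by_cases hi : i = a
        · subst hi; simpa using hy
        · simpa [hi] using h' i (by simp [hi, his])
    | zero => rw [f.map_update_zero]; exact T.zero_mem
    | add y z _ _ hy hz => rw [f.map_update_add]; exact T.add_mem hy hz
    | smul c y _ hy => rw [f.map_update_smul]; exact T.mul_mem_left _ hy

section
variable {S N N' : Type*} [CommRing S] [AddCommGroup N] [Module S N]
  [AddCommGroup N'] [Module S N']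

/-- The ideal generated by the `k × k` minors of a submodule `K` of `N`: all determinants
`det (g_j (x_i))` with `x_1, …, x_k ∈ K` and arbitrary linear forms `g_1, …, g_k` on `N`. If `N` is
free of rank `n`, this is the `(n - k)`-th Fitting ideal of `N ⧸ K`. -/
def minorIdeal (k : ℕ) (K : Submodule S N) : Ideal S :=
  Ideal.span {d | ∃ (g : Fin k → N →ₗ[S] S) (x : Fin k → N),
    (∀ i, x i ∈ K) ∧ d = (Matrix.of fun i j => g j (x i)).det}

theorem det_mem_minorIdeal {k : ℕ} {K : Submodule S N} (g : Fin k → N →ₗ[S] S) (x : Fin k → N)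
    (hx : ∀ i, x i ∈ K) : (Matrix.of fun i j => g j (x i)).det ∈ minorIdeal k K :=
  Ideal.subset_span ⟨g, x, hx, rfl⟩

theorem minorIdeal_zero (K : Submodule S N) : minorIdeal 0 K = ⊤ := by
  rw [Ideal.eq_top_iff_one]
  simpa using det_mem_minorIdeal (K := K) (k := 0) Fin.elim0 Fin.elim0 (fun i => i.elim0)

theorem minorIdeal_map_le (k : ℕ) (K : Submodule S N) (u : N →ₗ[S] N') :
    minorIdeal k (K.map u) ≤ minorIdeal k K := by
  refine Ideal.span_le.2 ?_
  rintro _ ⟨g, x, hx, rfl⟩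
  choose y hy hyx using hx
  simp_rw [← hyx]
  exact det_mem_minorIdeal (fun j => g j ∘ₗ u) y hy

theorem minorIdeal_map_equiv (k : ℕ) (K : Submodule S N) (e : N ≃ₗ[S] N') :
    minorIdeal k (K.map (e : N →ₗ[S] N')) = minorIdeal k K := by
  refine le_antisymm (minorIdeal_map_le k K _) ?_
  have := minorIdeal_map_le k (K.map (e : N →ₗ[S] N')) (e.symm : N' →ₗ[S] N)
  rwa [← Submodule.map_comp, LinearEquiv.comp_coe, LinearEquiv.self_trans_symm,
    LinearEquiv.refl_toLinearMap, Submodule.map_id] at this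

/-- Adding a redundant generator shifts the size of the minors by one. -/
theorem minorIdeal_prod_self (k : ℕ) (K : Submodule S N) :
    minorIdeal (k + 1) (K.prod (⊤ : Submodule S S)) = minorIdeal k K := by
  apply le_antisymm
  · refine Ideal.span_le.2 ?_
    rintro _ ⟨g, x, hx, rfl⟩
    -- By multilinearity all vectors lie in `K × 0` or equal `(0, 1)`. If `(0, 1)` occurs twice the
    -- determinant vanishes; otherwise expand along a row `p` outside of which all lie in `K × 0`.
    let X : Set (N × S) := (LinearMap.inl S N S '' (K : Set N)) ∪ {(0, 1)}
    have hX : ∀ i, x i ∈ Submodule.span S X := by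
      intro i
      have : x i = LinearMap.inl S N S (x i).1 + (x i).2 • ((0, 1) : N × S) := by
        ext <;> simp
      rw [this]
      refine add_mem (Submodule.subset_span (Or.inl ⟨_, (hx i).1, rfl⟩))
        (Submodule.smul_mem _ _ (Submodule.subset_span (Or.inr rfl)))
    refine multilinear_mem_of_span ((Matrix.detRowAlternating (R := S)
      (n := Fin (k+1))).toMultilinearMap.compLinearMap (fun _ => LinearMap.pi g)) X
      (minorIdeal k K) ?_ x hX
    intro v hv
    change (Matrix.of fun i j => g j (v i)).det ∈ _
    by_cases h2 : ∃ i j, i ≠ j ∧ v i = (0, 1) ∧ v j = (0, 1)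
    · obtain ⟨i, j, hij, hi, hj⟩ := h2
      rw [Matrix.det_zero_of_row_eq hij]
      · exact zero_mem _
      · ext; simp [hi, hj]
    · obtain ⟨p, hp⟩ : ∃ p : Fin (k + 1), ∀ j, j ≠ p →
          v j ∈ LinearMap.inl S N S '' (K : Set N) := by
        by_cases h1 : ∃ p, v p = (0, 1)
        · obtain ⟨p, hp⟩ := h1
          exact ⟨p, fun j hj => (hv j).resolve_right fun h => h2 ⟨j, p, hj, h, hp⟩⟩
        · exact ⟨0, fun j _ => (hv j).resolve_right fun h => h1 ⟨j, h⟩⟩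
      rw [Matrix.det_succ_row _ p]
      refine Ideal.sum_mem _ fun j _ => Ideal.mul_mem_left _ _ ?_
      choose y hy hyx using fun i => hp (p.succAbove i) (Fin.succAbove_ne p i)
      have := det_mem_minorIdeal (fun i => g (j.succAbove i) ∘ₗ LinearMap.inl S N S) y hy
      convert this using 2
      ext a b
      simp [← hyx]
  · refine Ideal.span_le.2 ?_
    rintro _ ⟨g, x, hx, rfl⟩
    have := det_mem_minorIdeal (K := K.prod (⊤ : Submodule S S))
      (Fin.cons (LinearMap.snd S N S) fun i => g i ∘ₗ LinearMap.fst S N S)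
      (Fin.cons ((0, 1) : N × S) fun i => (x i, 0)) (by
        intro i
        refine Fin.cases ?_ (fun i => ?_) i
        · simp
        · simpa using hx i)
    convert this
    rw [Matrix.det_succ_row_zero, Fin.sum_univ_succ]
    simp only [Matrix.of_apply, Fin.cons_zero, Fin.cons_succ]
    simp [Matrix.submatrix]

theorem minorIdeal_prod_pi (k n : ℕ) (K : Submodule S N) :
    minorIdeal (k + n) (K.prod (⊤ : Submodule S (Fin n → S))) = minorIdeal k K := by
  induction n with
  | zero =>
    rw [← minorIdeal_map_equiv k K (LinearEquiv.prodUnique (R := S) (M := N)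
      (M₂ := Fin 0 → S)).symm]
    congr 1
    ext ⟨a, b⟩
    simp [Submodule.mem_map_equiv]
  | succ n ih =>
    let e : (N × (Fin (n + 1) → S)) ≃ₗ[S] ((N × (Fin n → S)) × S) :=
      { toFun := fun z => ((z.1, Fin.tail z.2), z.2 0)
        map_add' := fun a b => rfl
        map_smul' := fun a b => rfl
        invFun := fun z => (z.1.1, Fin.cons z.2 z.1.2)
        left_inv := fun z => by simp
        right_inv := fun z => by simp }
    rw [← ih, ← minorIdeal_prod_self (k + n), ← minorIdeal_map_equiv _ _ e, add_assoc]
    congr 1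
    ext ⟨⟨a, b⟩, c⟩
    rw [Submodule.mem_map_equiv]
    simp [e]

/-- Lift `p'` to `A` with `p ∘ A = p'`; the automorphism `(x, y) ↦ (x + A y, y)` carries the kernel
of `(x, y) ↦ p x + p' y` to `ker p × S ^ n`. -/
theorem minorIdeal_ker_coprod {M : Type*} [AddCommGroup M] [Module S M] (k n : ℕ)
    (p p' : (Fin n → S) →ₗ[S] M) (hp : Function.Surjective p) :
    minorIdeal (k + n) (LinearMap.ker (p.coprod p')) = minorIdeal k (LinearMap.ker p) := by
  obtain ⟨A, hA⟩ := Module.projective_lifting_property p p' hp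
  have hA' : ∀ y, p (A y) = p' y := fun y => LinearMap.congr_fun hA y
  let e : ((Fin n → S) × (Fin n → S)) ≃ₗ[S] ((Fin n → S) × (Fin n → S)) :=
    { toFun := fun z => (z.1 + A z.2, z.2)
      map_add' := fun a b => by ext <;> simp; ring
      map_smul' := fun a b => by ext <;> simp
      invFun := fun z => (z.1 - A z.2, z.2)
      left_inv := fun z => by simp
      right_inv := fun z => by simp }
  rw [← minorIdeal_prod_pi k n, ← minorIdeal_map_equiv _ _ e]
  congr 1
  ext ⟨a, b⟩
  rw [Submodule.mem_map_equiv]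
  simp [e, hA']

/-- Fitting's lemma: the minor ideals of the relation module do not depend on the generators. -/
theorem minorIdeal_ker_eq {M : Type*} [AddCommGroup M] [Module S M] (k n : ℕ)
    (p p' : (Fin n → S) →ₗ[S] M) (hp : Function.Surjective p) (hp' : Function.Surjective p') :
    minorIdeal k (LinearMap.ker p) = minorIdeal k (LinearMap.ker p') := by
  rw [← minorIdeal_ker_coprod k n p p' hp, ← minorIdeal_ker_coprod k n p' p hp',
    ← minorIdeal_map_equiv _ _ (LinearEquiv.prodComm S (Fin n → S) (Fin n → S))]
  congr 1
  ext ⟨a, b⟩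
  simp [Submodule.mem_map_equiv, add_comm]

/-- For a submodule of `S ^ n` spanned by `X`, the minors of elements of `X` with respect to
coordinate forms suffice. -/
theorem minorIdeal_span_le {n : ℕ} (k : ℕ) (X : Set (Fin n → S)) (T : Ideal S)
    (h : ∀ (c : Fin k → Fin n) (x : Fin k → Fin n → S), (∀ i, x i ∈ X) →
      (Matrix.of fun i j => x i (c j)).det ∈ T) :
    minorIdeal k (Submodule.span S X) ≤ T := by
  refine Ideal.span_le.2 ?_
  rintro _ ⟨g, x, hx, rfl⟩
  refine multilinear_mem_of_span ((Matrix.detRowAlternating (R := S)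
      (n := Fin k)).toMultilinearMap.compLinearMap (fun _ => LinearMap.pi g)) X T ?_ x hx
  intro x hx
  change (Matrix.of fun i j => g j (x i)).det ∈ _
  rw [← Matrix.det_transpose]
  refine multilinear_mem_of_span ((Matrix.detRowAlternating (R := S)
      (n := Fin k)).toMultilinearMap.compLinearMap
      (fun _ => LinearMap.pi fun i => (LinearMap.applyₗ (x i) : ((Fin n → S) →ₗ[S] S) →ₗ[S] S)))
      (Set.range fun c : Fin n => (LinearMap.proj c : (Fin n → S) →ₗ[S] S)) T ?_ g ?_
  · intro v hv
    choose c hc using hv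
    change (Matrix.of fun j i => v j (x i)).det ∈ T
    rw [← Matrix.det_transpose]
    convert h c x hx using 2
    ext i j
    simp [← hc]
  · intro i
    have : g i = ∑ c, g i (Pi.single c 1) • (LinearMap.proj c : (Fin n → S) →ₗ[S] S) := by
      ext c
      simp [Pi.single_apply]
    rw [this]
    exact Submodule.sum_mem _ fun c _ =>
      Submodule.smul_mem _ _ (Submodule.subset_span ⟨c, rfl⟩)

theorem minorIdeal_eq_bot_of_lt {n k : ℕ} (hk : n < k) (K : Submodule S (Fin n → S)) :
    minorIdeal k K = ⊥ := by
  rw [eq_bot_iff, ← Submodule.span_eq K]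
  refine minorIdeal_span_le k _ _ fun c x _ => ?_
  obtain ⟨i, j, hij, hc⟩ := Fintype.exists_ne_map_eq_of_card_lt c (by simpa using hk)
  rw [Matrix.det_zero_of_column_eq hij (by simp [hc])]
  exact zero_mem _


/-- If some `k`-minors of `K` generate the unit ideal and all `(k + 1)`-minors vanish, then `K` is a
direct summand of `S ^ n`. -/
theorem exists_projection_of_minorIdeal {n k : ℕ} (K : Submodule S (Fin n → S))
    (h1 : minorIdeal k K = ⊤) (h0 : minorIdeal (k + 1) K = ⊥) :
    ∃ π : (Fin n → S) →ₗ[S] (Fin n → S), (∀ y, π y ∈ K) ∧ ∀ y ∈ K, π y = y := by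
  -- The `s` that are realised as multiplication by `s` on `K` form an ideal.
  suffices H : ∀ s ∈ minorIdeal k K, ∃ π : (Fin n → S) →ₗ[S] (Fin n → S),
      (∀ y, π y ∈ K) ∧ ∀ y ∈ K, π y = s • y by
    simpa using H 1 (h1 ▸ Submodule.mem_top)
  intro s hs
  induction hs using Submodule.span_induction with
  | zero => exact ⟨0, fun y => by simp, fun y _ => by simp⟩
  | add a b _ _ ha hb =>
    obtain ⟨π, h, h'⟩ := ha
    obtain ⟨ρ, hr, hr'⟩ := hb
    exact ⟨π + ρ, fun y => add_mem (h y) (hr y), fun y hy => by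
      simp [h' y hy, hr' y hy, add_smul]⟩
  | smul a b _ hb =>
    obtain ⟨π, h, h'⟩ := hb
    exact ⟨a • π, fun y => K.smul_mem a (h y), fun y hy => by simp [h' y hy, mul_smul]⟩
  | mem s hs =>
    obtain ⟨g, x, hx, rfl⟩ := hs
    -- The cofactors of `(y, x_1, …, x_k)` obtained by omitting `x_a` are linear in `y`.
    have hδ : ∀ a : Fin k, ∃ δ : (Fin n → S) →ₗ[S] S, ∀ y, δ y = (Matrix.of fun i j =>
        g j ((Fin.cons y x : Fin (k + 1) → Fin n → S) (a.succ.succAbove i))).det := by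
      intro a
      match k, a with
      | m + 1, a =>
        refine ⟨((Matrix.detRowAlternating (R := S)
          (n := Fin (m + 1))).toMultilinearMap.compLinearMap
          (fun _ => LinearMap.pi g)).toLinearMap (Fin.cons 0 fun i => x (a.succAbove i)) 0, ?_⟩
        intro y
        rw [MultilinearMap.toLinearMap_apply, Fin.update_cons_zero]
        change (Matrix.of fun i j => g j
          ((Fin.cons y fun i => x (a.succAbove i) : Fin (m + 1) → Fin n → S) i)).det = _
        congr 2
        ext i j
        refine Fin.cases ?_ (fun i => ?_) i <;> simp
    choose δ hδ using hδ
    refine ⟨-∑ a : Fin k, (-1 : S) ^ ((a : ℕ) + 1) • (δ a).smulRight (x a), fun y => ?_,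
      fun y hy => ?_⟩
    · simp only [LinearMap.neg_apply, LinearMap.sum_apply, LinearMap.smul_apply,
        LinearMap.smulRight_apply]
      exact neg_mem (sum_mem fun a _ => K.smul_mem _ (K.smul_mem _ (hx a)))
    · ext c
      -- The `c`-th coordinate is the expansion, along the coordinate form `c`, of the
      -- `(k + 1)`-minor of `y, x_1, …, x_k`.
      have hmem := det_mem_minorIdeal (K := K)
        (Fin.cons (LinearMap.proj c) g : Fin (k + 1) → (Fin n → S) →ₗ[S] S)
        (Fin.cons y x : Fin (k + 1) → Fin n → S)
        (by intro i; refine Fin.cases ?_ (fun i => ?_) i <;> simp [hx, hy])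
      rw [h0, Ideal.mem_bot, Matrix.det_succ_column_zero, Fin.sum_univ_succ] at hmem
      simp only [LinearMap.neg_apply, LinearMap.sum_apply, LinearMap.smul_apply,
        LinearMap.smulRight_apply, Pi.neg_apply, Finset.sum_apply, Pi.smul_apply, smul_eq_mul, hδ]
      rw [neg_eq_iff_add_eq_zero, add_comm, ← hmem]
      congr 1
      · simp [Matrix.submatrix, mul_comm]
      · refine Finset.sum_congr rfl fun a _ => ?_
        simp [Matrix.submatrix]
        ring

end

/-! ### Frobenius-invariant ideals of `Λ ⊗ R` -/

theorem eq_bot_or_top_of_isIdempotentElem {R : Type*} [CommRing R] [IsNoetherianRing R]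
    [ConnectedSpace (PrimeSpectrum R)] (J : Ideal R) (hJ : IsIdempotentElem J) :
    J = ⊥ ∨ J = ⊤ := by
  obtain ⟨e, he, rfl⟩ := (J.isIdempotentElem_iff_of_fg (IsNoetherian.noetherian J)).1 hJ
  have key : ∀ f : R, IsIdempotentElem f → (∀ x : PrimeSpectrum R, f ∈ x.asIdeal) → f = 0 := by
    intro f hf h
    have : f ∈ nilradical R := by
      rw [nilradical_eq_sInf]
      exact Submodule.mem_sInf.2 fun p hp => h ⟨p, hp⟩
    obtain ⟨n, hn⟩ := this
    have h' := hf.pow_succ_eq n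
    rw [pow_succ, hn, zero_mul] at h'
    exact h'.symm
  rcases isClopen_iff.1 (PrimeSpectrum.isClopen_basicOpen_of_mul_add e (1 - e)
    (by rw [mul_sub, he.eq, mul_one, sub_self]) (by ring)) with h | h
  · left
    have : e = 0 := key e he fun x => by
      by_contra hx
      exact (Set.eq_empty_iff_forall_notMem.1 h x) hx
    simp [this]
  · right
    have : 1 - e = 0 := key _ he.one_sub fun x => by
      have hx : e ∉ x.asIdeal := (Set.eq_univ_iff_forall.1 h x)
      refine (x.2.mem_or_mem (x := e) (y := 1 - e) ?_).resolve_left hx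
      rw [mul_sub, he.eq, mul_one, sub_self]
      exact zero_mem _
    rw [← sub_eq_zero.1 this]
    exact Ideal.span_singleton_one

theorem exists_algebraMap_eq {Fq κ : Type*} [Field Fq] [Fintype Fq] [Field κ] [Algebra Fq κ]
    (x : κ) (hx : x ^ Fintype.card Fq = x) : ∃ z : Fq, algebraMap Fq κ z = x := by
  have hprod := Polynomial.prod_multiset_X_sub_C_of_monic_of_roots_card_eq
    (p := (Polynomial.X ^ Fintype.card Fq - Polynomial.X : Polynomial Fq))
    (Polynomial.monic_X_pow_sub (by simpa using Fintype.one_lt_card))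
    (by rw [FiniteField.roots_X_pow_card_sub_X,
          FiniteField.X_pow_card_sub_X_natDegree_eq _ Fintype.one_lt_card]; rfl)
  rw [FiniteField.roots_X_pow_card_sub_X] at hprod
  change ∏ z : Fq, (Polynomial.X - Polynomial.C z) = _ at hprod
  have := congrArg (Polynomial.aeval x) hprod
  simp only [map_prod, map_sub, map_pow, Polynomial.aeval_X, Polynomial.aeval_C, hx, sub_self,
    Finset.prod_eq_zero_iff] at this
  obtain ⟨z, _, hz⟩ := this
  exact ⟨z, (sub_eq_zero.1 hz).symm⟩

/-- If `a ^ q ≡ c ^ (q - 1) a` modulo a prime `p` not containing `c`, then `a / c` is a root of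
`X ^ q - X` in the residue field, hence lies in `F_q`. -/
theorem exists_sub_mem_of_pow {Fq R : Type*} [Field Fq] [Fintype Fq] [CommRing R] [Algebra Fq R]
    (p : Ideal R) [p.IsPrime] (a c : R) (hc : c ∉ p)
    (h : a ^ Fintype.card Fq - c ^ (Fintype.card Fq - 1) * a ∈ p) :
    ∃ z : Fq, a - z • c ∈ p := by
  let θ : R →ₐ[Fq] p.ResidueField := IsScalarTower.toAlgHom Fq R p.ResidueField
  have hθ : ∀ r, θ r = 0 ↔ r ∈ p := fun r => Ideal.algebraMap_residueField_eq_zero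
  have hc' : θ c ≠ 0 := fun h => hc ((hθ c).1 h)
  have hq : 1 ≤ Fintype.card Fq := Fintype.card_pos
  have h2 := (hθ _).2 h
  simp only [map_sub, map_mul, map_pow] at h2
  have h3 : (θ a / θ c) ^ Fintype.card Fq = θ a / θ c := by
    rw [div_pow, div_eq_div_iff (pow_ne_zero _ hc') hc', sub_eq_zero.1 h2]
    obtain ⟨m, hm⟩ := Nat.exists_eq_add_of_le' hq
    rw [hm]
    simp only [Nat.add_sub_cancel, pow_succ]
    ring
  obtain ⟨z, hz⟩ := exists_algebraMap_eq (Fq := Fq) _ h3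
  refine ⟨z, (hθ _).1 ?_⟩
  rw [map_sub, map_smul, Algebra.smul_def, hz, div_mul_cancel₀ _ hc', sub_self]

section
variable {Fq Λ R : Type*} [Field Fq] [Field Λ] [Algebra Fq Λ] [CommRing R]
  [Algebra Fq R] {ι : Type*} (b : Module.Basis ι Fq Λ)

open Classical in
/-- The coordinates in `R` of an element of `Λ ⊗ R` with respect to an `F_q`-basis of `Λ`. -/
noncomputable def coeffs : (Λ ⊗[Fq] R) ≃ₗ[Fq] (ι →₀ R) := TensorProduct.equivFinsuppOfBasisLeft b

theorem coeffs_tmul (l : Λ) (r : R) (i : ι) : coeffs b (l ⊗ₜ[Fq] r) i = b.repr l i • r := by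
  simp [coeffs]

theorem coeffs_mul_one_tmul (s : Λ ⊗[Fq] R) (r : R) (i : ι) :
    coeffs b (s * (1 ⊗ₜ[Fq] r)) i = coeffs b s i * r := by
  induction s using TensorProduct.induction_on with
  | zero => simp
  | add x y hx hy => simp [add_mul, hx, hy]
  | tmul l t => simp [coeffs_tmul]

theorem eq_sum_coeffs (s : Λ ⊗[Fq] R) :
    s = ∑ i ∈ (coeffs b s).support, b i ⊗ₜ[Fq] coeffs b s i := by
  classical
  conv_lhs => rw [← (coeffs b).symm_apply_apply s]
  rw [coeffs, TensorProduct.equivFinsuppOfBasisLeft_symm_apply]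
  rfl

theorem tmul_mem_map (J : Ideal R) (l : Λ) {r : R} (hr : r ∈ J) : l ⊗ₜ[Fq] r ∈
    J.map (Algebra.TensorProduct.includeRight : R →ₐ[Fq] Λ ⊗[Fq] R) := by
  have : l ⊗ₜ[Fq] r = (l ⊗ₜ[Fq] (1 : R)) *
    (Algebra.TensorProduct.includeRight : R →ₐ[Fq] Λ ⊗[Fq] R) r := by simp
  rw [this]
  exact Ideal.mul_mem_left _ _ (Ideal.mem_map_of_mem _ hr)

/-- The extension of an ideal `J` of `R` consists of the elements all of whose coordinates lie in
`J`. -/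
theorem mem_map_iff_coeffs (J : Ideal R) (s : Λ ⊗[Fq] R) :
    s ∈ J.map (Algebra.TensorProduct.includeRight : R →ₐ[Fq] Λ ⊗[Fq] R) ↔
      ∀ i, coeffs b s i ∈ J := by
  constructor
  · intro hs
    suffices H : ∀ t i, coeffs b (t * s) i ∈ J by simpa using H 1
    induction hs using Submodule.span_induction with
    | mem s hs =>
      obtain ⟨r, hr, rfl⟩ := hs
      intro t i
      exact (congrArg (· ∈ J) (coeffs_mul_one_tmul b t r i)).mpr (J.mul_mem_left _ hr)
    | zero => simp
    | add x y _ _ hx hy => intro t i; simpa [mul_add] using J.add_mem (hx t i) (hy t i)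
    | smul a x hx ih => intro t i; simpa [mul_assoc] using ih (t * a) i
  · intro h
    rw [eq_sum_coeffs b s]
    exact sum_mem fun i _ => tmul_mem_map J _ (h i)

variable [Fintype Fq]

/-- The Frobenius raises each coordinate to the `q`-th power. -/
theorem coeffs_frobenius (F : (Λ ⊗[Fq] R) →+* (Λ ⊗[Fq] R))
    (hF : ∀ (l : Λ) (r : R), F (l ⊗ₜ[Fq] r) = l ⊗ₜ[Fq] (r ^ Fintype.card Fq))
    (s : Λ ⊗[Fq] R) (i : ι) : coeffs b (F s) i = coeffs b s i ^ Fintype.card Fq := by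
  classical
  conv_lhs => rw [eq_sum_coeffs b s]
  simp only [map_sum, hF, Finsupp.coe_finsetSum, Finset.sum_apply, coeffs_tmul,
    Module.Basis.repr_self, Finsupp.single_apply, ite_smul, one_smul, zero_smul,
    Finset.sum_ite_eq']
  split_ifs with h
  · rfl
  · rw [Finsupp.notMem_support_iff.1 h, zero_pow Fintype.card_ne_zero]

/-- The invariant ideal theorem for field coefficients. -/
theorem invariant_ideal_eq_bot_or_top [IsNoetherianRing R] [ConnectedSpace (PrimeSpectrum R)]
    (F : (Λ ⊗[Fq] R) →+* (Λ ⊗[Fq] R))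
    (hF : ∀ (l : Λ) (r : R), F (l ⊗ₜ[Fq] r) = l ⊗ₜ[Fq] (r ^ Fintype.card Fq))
    (I : Ideal (Λ ⊗[Fq] R)) (hI : I.map F = I) : I = ⊥ ∨ I = ⊤ := by
  classical
  let b := Module.Basis.ofVectorSpace Fq Λ
  let J : Ideal R := Ideal.span {r | ∃ s ∈ I, ∃ i, r = coeffs b s i}
  have hcJ : ∀ s ∈ I, ∀ i, coeffs b s i ∈ J := fun s hs i => Ideal.subset_span ⟨s, hs, i, rfl⟩
  have hJ2 : J ≤ J * J := by
    have h1 : I ≤ (J * J).map (Algebra.TensorProduct.includeRight : R →ₐ[Fq] Λ ⊗[Fq] R) := by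
      rw [← hI]
      refine Ideal.map_le_iff_le_comap.2 fun s hs => ?_
      refine (mem_map_iff_coeffs b (J * J) (F s)).2 fun i => ?_
      rw [coeffs_frobenius b F hF, ← pow_two]
      exact Ideal.pow_le_pow_right Fintype.one_lt_card (Ideal.pow_mem_pow (hcJ s hs i) _)
    refine Ideal.span_le.2 ?_
    rintro _ ⟨s, hs, i, rfl⟩
    exact (mem_map_iff_coeffs b (J * J) s).1 (h1 hs) i
  rcases eq_bot_or_top_of_isIdempotentElem J (le_antisymm Ideal.mul_le_left hJ2) with h | h
  · left
    rw [eq_bot_iff]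
    intro s hs
    have : coeffs b s = 0 := by ext i; simpa [h] using hcJ s hs i
    simpa using this
  right
  by_contra hne
  obtain ⟨P, hP, hIP⟩ := Ideal.exists_le_maximal I hne
  let p : Ideal R := P.comap (Algebra.TensorProduct.includeRight : R →ₐ[Fq] Λ ⊗[Fq] R)
  have hpP : ∀ s, (∀ i, coeffs b s i ∈ p) → s ∈ P := fun s hs =>
    Ideal.map_comap_le ((mem_map_iff_coeffs b p s).2 hs)
  have hp : p.IsPrime := Ideal.comap_isPrime _ _
  let bad : (Λ ⊗[Fq] R) → Finset _ := fun s => (coeffs b s).support.filter (coeffs b s · ∉ p)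
  have hbad : ∀ s i, i ∈ bad s ↔ coeffs b s i ∉ p := by
    intro s i
    simp only [bad, Finset.mem_filter, Finsupp.mem_support_iff, and_iff_right_iff_imp]
    intro h h0
    exact h (h0 ▸ zero_mem p)
  have hex : ∃ n, ∃ s ∈ I, (bad s).Nonempty ∧ (bad s).card = n := by
    by_contra! hcon
    refine hp.ne_top (top_le_iff.1 (h ▸ Ideal.span_le.2 ?_))
    rintro _ ⟨s, hs, i, rfl⟩
    by_contra hi
    exact hcon _ s hs ⟨i, (hbad s i).2 hi⟩ rfl
  -- `s ∈ I` has the least positive number of coordinates outside `p`.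
  obtain ⟨s, hs, ⟨i₀, hi₀⟩, hn⟩ := Nat.find_spec hex
  have hmin := fun m (hm : m < Nat.find hex) => Nat.find_min hex hm
  rw [← hn] at hmin
  set c := coeffs b s i₀ with hc
  have hcp : c ∉ p := (hbad s i₀).1 hi₀
  let t := F s - s * (1 ⊗ₜ[Fq] (c ^ (Fintype.card Fq - 1)))
  have htI : t ∈ I := sub_mem (hI ▸ Ideal.mem_map_of_mem F hs) (I.mul_mem_right _ hs)
  have htc : ∀ i, coeffs b t i = coeffs b s i ^ Fintype.card Fq -
      c ^ (Fintype.card Fq - 1) * coeffs b s i := by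
    intro i
    simp only [t, map_sub, Finsupp.sub_apply, coeffs_frobenius b F hF, coeffs_mul_one_tmul]
    rw [mul_comm (c ^ _)]
  have hq : Fintype.card Fq = Fintype.card Fq - 1 + 1 :=
    (Nat.sub_add_cancel Fintype.card_pos).symm
  -- `t` has no coordinate outside `p` beyond those of `s`, and the one at `i₀` is killed.
  have htp : ∀ i, coeffs b t i ∈ p := by
    by_contra! hcon
    obtain ⟨i, hi⟩ := hcon
    refine hmin _ (Finset.card_lt_card (s := bad t) ?_) ⟨t, htI, ⟨i, (hbad t i).2 hi⟩, rfl⟩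
    refine (Finset.ssubset_iff_of_subset fun j hj => ?_).2 ⟨i₀, hi₀, ?_⟩
    · rw [hbad] at hj ⊢
      intro hj'
      refine hj ?_
      rw [htc]
      exact sub_mem (Ideal.pow_mem_of_mem _ hj' _ Fintype.card_pos) (p.mul_mem_left _ hj')
    · rw [hbad, not_not, htc, ← hc, ← pow_succ, ← hq, sub_self]
      exact zero_mem p
  have hz : ∀ i, ∃ z : Fq, coeffs b s i - z • c ∈ p := fun i =>
    exists_sub_mem_of_pow p _ c hcp (htc i ▸ htp i)
  choose z hz using hz
  let l : Λ := ∑ i ∈ (coeffs b s).support, z i • b i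
  have hl : ∀ i ∈ (coeffs b s).support, b.repr l i = z i := by
    intro i hi
    simp only [l, map_sum, map_smul, Module.Basis.repr_self, Finsupp.coe_finsetSum,
      Finset.sum_apply, Finsupp.smul_apply, Finsupp.single_apply, smul_eq_mul, mul_ite, mul_one,
      mul_zero, Finset.sum_ite_eq', if_pos hi]
  have hl' : ∀ i ∉ (coeffs b s).support, b.repr l i = 0 := by
    intro i hi
    simp only [l, map_sum, map_smul, Module.Basis.repr_self, Finsupp.coe_finsetSum,
      Finset.sum_apply, Finsupp.smul_apply, Finsupp.single_apply, smul_eq_mul, mul_ite, mul_one,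
      mul_zero, Finset.sum_ite_eq', if_neg hi]
  have hi₀s : i₀ ∈ (coeffs b s).support := (Finset.mem_filter.1 hi₀).1
  have hl0 : l ≠ 0 := by
    intro h0
    have h1 := hl i₀ hi₀s
    rw [h0, map_zero, Finsupp.zero_apply] at h1
    have h2 := hz i₀
    rw [← h1, zero_smul, sub_zero] at h2
    exact hcp h2
  have hdiff : s - l ⊗ₜ[Fq] c ∈ P := by
    refine hpP _ fun i => ?_
    rw [map_sub, Finsupp.sub_apply, coeffs_tmul]
    by_cases hi : i ∈ (coeffs b s).support
    · rw [hl i hi]; exact hz i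
    · rw [hl' i hi, Finsupp.notMem_support_iff.1 hi, zero_smul, sub_zero]; exact zero_mem p
  have hlc : l ⊗ₜ[Fq] c ∈ P := (Submodule.sub_mem_iff_right P (hIP hs)).1 hdiff
  refine hcp ?_
  change (1 : Λ) ⊗ₜ[Fq] c ∈ P
  have : (1 : Λ) ⊗ₜ[Fq] c = (l⁻¹ ⊗ₜ[Fq] (1 : R)) * (l ⊗ₜ[Fq] c) := by
    simp [inv_mul_cancel₀ hl0]
  rw [this]
  exact P.mul_mem_left _ hlc
end

/-! ### Unit modules -/

section
variable {S M : Type} [CommRing S] [AddCommGroup M] [Module S M] {F : S →+* S}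

theorem semilinear_add (φ : M →ₗ[S] Restrict F M) (x y : M) :
    (φ (x + y)).out = (φ x).out + (φ y).out := φ.map_add x y

theorem semilinear_smul (φ : M →ₗ[S] Restrict F M) (a : S) (x : M) :
    (φ (a • x)).out = F a • (φ x).out := φ.map_smul a x

theorem semilinear_sum {Q : Type} [AddCommGroup Q] [Module S Q] (φ : M →ₗ[S] Restrict F Q)
    {n : ℕ} (a : Fin n → S) (m : Fin n → M) :
    (φ (∑ i, a i • m i)).out = ∑ i, F (a i) • (φ (m i)).out := by
  refine (map_sum φ _ _).trans ?_
  exact Finset.sum_congr rfl fun i _ => φ.map_smul (a i) (m i)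

/-- If `m` generates `M`, then the elements `φ (m i)` generate `M`, and their relations are spanned
by the `F`-twists of the relations among the `m i`. -/
theorem presentation_pullback (φ : M →ₗ[S] Restrict F M) (hφ : IsBaseChangeAlong F φ)
    {n : ℕ} (m : Fin n → M) (hm : Function.Surjective (Fintype.linearCombination S m)) :
    Function.Surjective (Fintype.linearCombination S fun i => (φ (m i)).out) ∧
      LinearMap.ker (Fintype.linearCombination S fun i => (φ (m i)).out) =
        Submodule.span S ((fun a => F ∘ a) ''
          (LinearMap.ker (Fintype.linearCombination S m) : Set (Fin n → S))) := by
  set p := Fintype.linearCombination S m with hp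
  set p' := Fintype.linearCombination S fun i => (φ (m i)).out with hp'
  have hpF : ∀ a, (φ (p a)).out = p' (F ∘ a) := by
    intro a
    rw [hp, hp', Fintype.linearCombination_apply, Fintype.linearCombination_apply]
    exact semilinear_sum φ a m
  constructor
  · rw [← LinearMap.range_eq_top]
    -- The quotient map and `0` both extend the zero map, so they agree.
    obtain ⟨H, _, hH⟩ := hφ (M ⧸ LinearMap.range p') 0
    have h1 := hH (LinearMap.range p').mkQ fun x => by
      obtain ⟨a, rfl⟩ := hm x
      rw [hpF]
      exact (Submodule.Quotient.mk_eq_zero _).2 ⟨_, rfl⟩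
    have h2 := hH 0 fun x => rfl
    rw [← Submodule.ker_mkQ (LinearMap.range p'), h1.trans h2.symm, LinearMap.ker_zero]
  · set K' := Submodule.span S ((fun a => F ∘ a) '' (LinearMap.ker p : Set (Fin n → S))) with hK'
    apply le_antisymm
    -- The universal property turns `p a ↦ [F ∘ a]` into a map `M → S ^ n ⧸ K'` whose composite
    -- with `p'` is the quotient map.
    · let h₀ : (Fin n → S) →ₗ[S] Restrict F ((Fin n → S) ⧸ K') :=
        { toFun := fun a => K'.mkQ (F ∘ a)
          map_add' := fun a b => by
            have : F ∘ (a + b) = F ∘ a + F ∘ b := by ext; simp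
            rw [this]
            exact map_add K'.mkQ _ _
          map_smul' := fun c a => by
            have : F ∘ (c • a) = F c • (F ∘ a) := by ext; simp
            rw [this]
            exact map_smul K'.mkQ _ _ }
      have hker : LinearMap.ker p ≤ LinearMap.ker h₀ := fun a ha =>
        (Submodule.Quotient.mk_eq_zero K').2 (Submodule.subset_span ⟨a, ha, rfl⟩)
      let h : M →ₗ[S] Restrict F ((Fin n → S) ⧸ K') :=
        (LinearMap.ker p).liftQ h₀ hker ∘ₗ (p.quotKerEquivOfSurjective hm).symm.toLinearMap
      have hh : ∀ a, h (p a) = h₀ a := by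
        intro a
        have : (p.quotKerEquivOfSurjective hm).symm (p a) = Submodule.Quotient.mk a := by
          rw [LinearEquiv.symm_apply_eq]; rfl
        simp only [h, LinearMap.comp_apply, LinearEquiv.coe_coe, this]
        rfl
      obtain ⟨H, hH, _⟩ := hφ _ h
      have hHp : H ∘ₗ p' = K'.mkQ := by
        refine LinearMap.pi_ext' fun i => LinearMap.ext_ring ?_
        simp only [LinearMap.comp_apply, LinearMap.coe_single]
        have e1 : (Pi.single i 1 : Fin n → S) = F ∘ (Pi.single i 1 : Fin n → S) := by
          ext j
          by_cases hj : j = i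
          · subst hj; simp
          · simp [hj]
        rw [e1, ← hpF, hH, hh, ← e1]
        change K'.mkQ (F ∘ Pi.single i 1) = _
        rw [← e1]
      rw [← Submodule.ker_mkQ K', ← hHp]
      exact LinearMap.ker_le_ker_comp _ _
    · refine Submodule.span_le.2 ?_
      rintro _ ⟨a, ha, rfl⟩
      have : p' (F ∘ a) = (φ 0).out := by rw [← hpF, LinearMap.mem_ker.1 ha]
      exact this.trans φ.map_zero

/-- The Fitting ideals of a unit module are `F`-invariant. -/
theorem map_minorIdeal_ker (φ : M →ₗ[S] Restrict F M) (hφ : IsBaseChangeAlong F φ)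
    {n : ℕ} (m : Fin n → M) (hm : Function.Surjective (Fintype.linearCombination S m)) (k : ℕ) :
    (minorIdeal k (LinearMap.ker (Fintype.linearCombination S m))).map F =
      minorIdeal k (LinearMap.ker (Fintype.linearCombination S m)) := by
  obtain ⟨hs, hk⟩ := presentation_pullback φ hφ m hm
  set K := LinearMap.ker (Fintype.linearCombination S m) with hK
  have hinv : minorIdeal k K = minorIdeal k (Submodule.span S ((fun a => F ∘ a) '' (K : Set _))) :=
    (minorIdeal_ker_eq k n _ _ hm hs).trans (by rw [hk])
  have hdet : ∀ (c : Fin k → Fin n) (x : Fin k → Fin n → S),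
      F (Matrix.of fun i j => x i (c j)).det = (Matrix.of fun i j => (F ∘ x i) (c j)).det := by
    intro c x
    rw [RingHom.map_det]
    rfl
  apply le_antisymm
  · rw [Ideal.map_le_iff_le_comap]
    conv_lhs => rw [← Submodule.span_eq K]
    refine minorIdeal_span_le k _ _ fun c x hx => ?_
    rw [Ideal.mem_comap, hdet, hinv]
    exact det_mem_minorIdeal (K := Submodule.span S ((fun a => F ∘ a) '' (K : Set (Fin n → S))))
      (fun j => LinearMap.proj (c j)) (fun i => F ∘ x i)
      fun i => Submodule.subset_span ⟨x i, hx i, rfl⟩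
  · conv_lhs => rw [hinv]
    refine minorIdeal_span_le k _ _ fun c x hx => ?_
    choose y hy hyx using hx
    simp_rw [← hyx]
    rw [← hdet]
    exact Ideal.mem_map_of_mem F
      (det_mem_minorIdeal (fun j => LinearMap.proj (c j)) y fun i => hy i)

/-- A finitely generated module whose Fitting ideals are all `0` or `1` is projective. -/
theorem projective_of_minorIdeal {n : ℕ} (p : (Fin n → S) →ₗ[S] M) (hp : Function.Surjective p)
    (h : ∀ k, minorIdeal k (LinearMap.ker p) = ⊥ ∨ minorIdeal k (LinearMap.ker p) = ⊤) :
    Module.Projective S M := by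
  obtain ⟨k, h1, h0⟩ : ∃ k, minorIdeal k (LinearMap.ker p) = ⊤ ∧
      minorIdeal (k + 1) (LinearMap.ker p) = ⊥ := by
    by_contra! hcon
    have hall : ∀ k, minorIdeal k (LinearMap.ker p) = ⊤ := by
      intro k
      induction k with
      | zero => exact minorIdeal_zero _
      | succ k ih => exact (h (k + 1)).resolve_left (hcon k ih)
    exact hcon n (hall n) (minorIdeal_eq_bot_of_lt (Nat.lt_succ_self n) _)
  obtain ⟨π, hπ, hπ'⟩ := exists_projection_of_minorIdeal _ h1 h0
  let σ : M →ₗ[S] (Fin n → S) := (LinearMap.ker p).liftQ (LinearMap.id - π)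
    (fun y hy => by simp [hπ' y hy]) ∘ₗ (p.quotKerEquivOfSurjective hp).symm.toLinearMap
  refine Module.Projective.of_split σ p (LinearMap.ext fun x => ?_)
  obtain ⟨a, rfl⟩ := hp x
  have : (p.quotKerEquivOfSurjective hp).symm (p a) = Submodule.Quotient.mk a := by
    rw [LinearEquiv.symm_apply_eq]; rfl
  simp only [σ, LinearMap.comp_apply, LinearEquiv.coe_coe, this, LinearMap.id_apply]
  change p (a - π a) = p a
  rw [map_sub, LinearMap.mem_ker.1 (hπ a), sub_zero]

end

/-- **Unit modules with field coefficients are locally free** (Proposition `ufinpres`).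
Let `Λ` be a field containing `F_q`, `R` a connected Noetherian `F_q`-algebra,
`S = Λ ⊗[F_q] R`, and `F : S → S` the Frobenius (identity on `Λ`, `q`-power on `R`).
If `M` is a finitely generated `S`-module with a unit structure `φ : F*M ≅ M`, then `M` is
a finitely presented, flat, hence projective (locally free) `S`-module. -/
theorem unit_module_field_coefficients_projective
    (Fq : Type) [Field Fq] [Fintype Fq]
    (Λ : Type) [Field Λ] [Algebra Fq Λ]
    (R : Type) [CommRing R] [Algebra Fq R] [IsNoetherianRing R]
    [ConnectedSpace (PrimeSpectrum R)]
    (F : (Λ ⊗[Fq] R) →+* (Λ ⊗[Fq] R))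
    (hF : ∀ (l : Λ) (r : R), F (l ⊗ₜ[Fq] r) = l ⊗ₜ[Fq] (r ^ Fintype.card Fq))
    (M : Type) [AddCommGroup M] [Module (Λ ⊗[Fq] R) M] [Module.Finite (Λ ⊗[Fq] R) M]
    (φ : M →ₗ[Λ ⊗[Fq] R] Restrict F M) (hφ : IsBaseChangeAlong F φ) :
    Module.FinitePresentation (Λ ⊗[Fq] R) M ∧
      Module.Flat (Λ ⊗[Fq] R) M ∧ Module.Projective (Λ ⊗[Fq] R) M := by
  have hproj : Module.Projective (Λ ⊗[Fq] R) M := by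
    obtain ⟨n, p, hp⟩ := Module.Finite.exists_fin' (Λ ⊗[Fq] R) M
    have hpm : Fintype.linearCombination (Λ ⊗[Fq] R) (fun i => p (Pi.single i 1)) = p := by
      refine LinearMap.pi_ext' fun i => LinearMap.ext_ring ?_
      simp
    rw [← hpm] at hp
    exact projective_of_minorIdeal _ hp fun k =>
      invariant_ideal_eq_bot_or_top F hF _ (map_minorIdeal_ker φ hφ _ hp k)
  exact ⟨Module.finitePresentation_of_projective _ _, inferInstance, hproj⟩
end

section
/- Let R be a connected Noetherian F_q-algebra, Λ an F_q-algebra, and M, N finitely generated Λ ⊗_{F_q} R-modules with unit structures, with Λ essentially of finite type over F_q. Let α : M → N be a Λ ⊗_{F_q} R-linear surjection commuting with the unit structures. Then the kernel Q of α, with its induced map φ_Q : F*Q → Q, has φ_Q an isomorphism. (Uses that N is R-flat, so 0 → F*Q → F*M → F*N → 0 remains exact.) -/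
/-!
Write `S = Λ ⊗ R` and let `f` be the `q`-power Frobenius of `R`. Since `F` is the identity on `Λ`,
the square with sides `R → S` and the endomorphisms `f`, `F` is a pushout. So `φ` is a unit
structure over `(S, F)` if and only if it is one over `(R, f)` (`isBaseChange_of_along`,
`along_of_isBaseChange`), and the question concerns base change along `f` only.

The crucial point is that a unit module `N` which is finite over the Noetherian ring `S` is flat
over `R` (`flat_of_unit`). Let `p` be a prime of `R` and let `A` be the localization of `R ⧸ p ^ n`
at `p`. Because `N` is its own pullback along `f`, its base change along `R → A` equals its base
change along the composite of `f ^ e` and `R → A`. For large `e` this composite kills `p`, hence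
factors through the residue field of `p`, over which everything is flat (`flatAlong_of_nilpotent`).
Flatness of all these reductions implies flatness of `N` by the local criterion
(`flat_of_forall_flatAlong`), whose proof rests on the Artin-Rees lemma over `R` and Krull's
intersection theorem over `S`.

As `N` is flat, base change along `f` preserves exactness of `0 → Q → M → N → 0`, and comparing the
resulting short exact sequence with the original one shows that `Q` is a unit module
(`isBaseChange_of_exact`).
-/

open TensorProduct

/-! ### Base changes of a unit module along powers of Frobenius -/

/-- The ring `R`, regarded as an `R`-algebra through the endomorphism `f : R →+* R`. -/
def Twist {R : Type} [CommRing R] (_f : R →+* R) : Type := R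

namespace Twist

variable {R : Type} [CommRing R] (f : R →+* R)

instance : CommRing (Twist f) := inferInstanceAs (CommRing R)

instance : Algebra R (Twist f) := f.toAlgebra

/-- `Restrict f M` still carries the original `R`-action of `M`, now as an action of `Twist f`. -/
instance (M : Type) [AddCommGroup M] [Module R M] : Module (Twist f) (Restrict f M) :=
  inferInstanceAs (Module R M)

instance (M : Type) [AddCommGroup M] [Module R M] :
    IsScalarTower R (Twist f) (Restrict f M) where
  smul_assoc r s x := mul_smul (f r) (show R from s) (show M from x)

end Twist

section FlatAlong

variable {R A : Type} [CommRing R] [CommRing A]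

/-- The base change of `N` along the ring homomorphism `g : R →+* A` is a flat `A`-module. -/
def FlatAlong (g : R →+* A) (N : Type) [AddCommGroup N] [Module R N] : Prop :=
  letI := g.toAlgebra
  Module.Flat A (A ⊗[R] N)

/-- `FlatAlong` builds its algebra structure from the ring homomorphism; this restates it for the
ambient one. -/
theorem FlatAlong.flat_baseChange [Algebra R A] {N : Type} [AddCommGroup N] [Module R N]
    (h : FlatAlong (algebraMap R A) N) : Module.Flat A (A ⊗[R] N) := by
  have h1 : (algebraMap R A).toAlgebra = ‹Algebra R A› := Algebra.algebra_ext _ _ fun _ => rfl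
  have h2 : ∀ i j : Algebra R A, i = j →
      (letI := i; Module.Flat A (A ⊗[R] N)) → (letI := j; Module.Flat A (A ⊗[R] N)) := by
    rintro i _ rfl h
    exact h
  exact h2 _ _ h1 h

/-- If `N'` is the base change of `N` along `R → R'`, flatness over `A` of the base change of `N`
passes to the base change of `N'`. -/
theorem flat_baseChange_of_equiv (R R' A N N' : Type) [CommRing R] [CommRing R'] [CommRing A]
    [Algebra R R'] [Algebra R' A] [Algebra R A] [IsScalarTower R R' A]
    [AddCommGroup N] [Module R N] [AddCommGroup N'] [Module R' N']
    (e : R' ⊗[R] N ≃ₗ[R'] N') (h : Module.Flat A (A ⊗[R] N)) : Module.Flat A (A ⊗[R'] N') := by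
  have e1 : A ⊗[R'] N' ≃ₗ[A] A ⊗[R'] (R' ⊗[R] N) :=
    (TensorProduct.AlgebraTensorModule.congr (LinearEquiv.refl A A) e.symm)
  exact Module.Flat.of_linearEquiv
    (e1.trans (TensorProduct.AlgebraTensorModule.cancelBaseChange R R' A A N))

/-- For a unit module `N` over `(R, f)`, the base changes of `N` along `g` and along `g ∘ f`
agree; this transports flatness. -/
theorem FlatAlong.of_comp (f : R →+* R) {N : Type} [AddCommGroup N] [Module R N]
    (φ : N →ₗ[R] Restrict f N) (hφ : IsBaseChange (Twist f) φ) (g : R →+* A)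
    (h : FlatAlong (g.comp f) N) : FlatAlong g N := by
  let : Algebra R A := (g.comp f).toAlgebra
  let : Algebra (Twist f) A := g.toAlgebra
  have : IsScalarTower R (Twist f) A := IsScalarTower.of_algebraMap_eq fun _ => rfl
  exact flat_baseChange_of_equiv R (Twist f) A N (Restrict f N) hφ.equiv h

/-- If `g` factors through a residue field of `R`, then every base change along `g` is flat. -/
theorem flatAlong_of_prime (N : Type) [AddCommGroup N] [Module R N] (p : Ideal R) [p.IsPrime]
    (g : R →+* A) (h0 : ∀ r ∈ p, g r = 0) (h1 : ∀ r ∉ p, IsUnit (g r)) : FlatAlong g N := by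
  let : Algebra R A := g.toAlgebra
  let : Algebra p.ResidueField A :=
    (Ideal.ResidueField.lift p g (fun r hr => h0 r hr) (fun r hr => h1 r hr)).toAlgebra
  have : IsScalarTower R p.ResidueField A := IsScalarTower.of_algebraMap_eq fun r =>
    (Ideal.ResidueField.lift_algebraMap p g (fun r hr => h0 r hr) (fun r hr => h1 r hr) r).symm
  exact Module.Flat.of_linearEquiv
    (TensorProduct.AlgebraTensorModule.cancelBaseChange R p.ResidueField A A N).symm

/-- A unit module becomes flat over every `R`-algebra in which the elements outside a prime `p`
are invertible and the elements of `p` are nilpotent of bounded order: a sufficiently high power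
of Frobenius makes the structure map factor through the residue field of `p`. -/
theorem flatAlong_of_nilpotent (q : ℕ) (f : R →+* R) (hf : ∀ r, f r = r ^ q)
    {N : Type} [AddCommGroup N] [Module R N]
    (φ : N →ₗ[R] Restrict f N) (hφ : IsBaseChange (Twist f) φ) (p : Ideal R) [p.IsPrime] (e : ℕ)
    (g : R →+* A) (h0 : ∀ r ∈ p, g r ^ q ^ e = 0) (h1 : ∀ r ∉ p, IsUnit (g r)) :
    FlatAlong g N := by
  induction e generalizing g with
  | zero => exact flatAlong_of_prime N p g (fun r hr => by simpa using h0 r hr) h1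
  | succ e ih =>
    refine FlatAlong.of_comp f φ hφ g (ih (g.comp f) (fun r hr => ?_) (fun r hr => ?_))
    · simpa [hf, ← pow_mul, ← pow_succ'] using h0 r hr
    · simpa [hf] using (h1 r hr).pow q

end FlatAlong

/-! ### A local criterion of flatness -/

section LocalCriterion

variable {R S : Type} [CommRing R] [CommRing S] [Algebra R S]

/-- Krull's intersection theorem at a prime `P` of `S` lying over `p`: an element `x` which, up to
factors outside `P`, lies in `p ^ k • X` for all `k` vanishes in the localization of `X` at `P`. -/
theorem mkLinearMap_eq_zero_of_forall_pow [IsNoetherianRing S] {X : Type} [AddCommGroup X]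
    [Module R X] [Module S X] [IsScalarTower R S X] [Module.Finite S X] (P : Ideal S) [P.IsPrime]
    (x : X) (h : ∀ k : ℕ, ∃ t : R, algebraMap R S t ∉ P ∧
      t • x ∈ ((P.comap (algebraMap R S)) ^ k • ⊤ : Submodule R X)) :
    LocalizedModule.mkLinearMap P.primeCompl X x = 0 := by
  have key : LocalizedModule.mkLinearMap P.primeCompl X x ∈
      (⨅ k : ℕ, (IsLocalRing.maximalIdeal (Localization.AtPrime P)) ^ k • ⊤ :
        Submodule (Localization.AtPrime P) (LocalizedModule P.primeCompl X)) := by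
    rw [Submodule.mem_iInf]
    intro k
    obtain ⟨t, ht, htx⟩ := h k
    set T := ((IsLocalRing.maximalIdeal (Localization.AtPrime P)) ^ k • ⊤ :
        Submodule (Localization.AtPrime P) (LocalizedModule P.primeCompl X)) with hT
    have h1 : LocalizedModule.mkLinearMap P.primeCompl X (t • x) ∈ T := by
      refine Submodule.smul_induction_on htx (fun r hr y _ => ?_) (fun y z hy hz => ?_)
      · rw [← algebraMap_smul S r y, map_smul,
          ← algebraMap_smul (Localization.AtPrime P) (algebraMap R S r)]
        refine Submodule.smul_mem_smul ?_ trivial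
        have h2 := Ideal.mem_map_of_mem
          ((algebraMap S (Localization.AtPrime P)).comp (algebraMap R S)) hr
        rw [Ideal.map_pow] at h2
        refine Ideal.pow_right_mono ?_ k h2
        rw [Ideal.map_le_iff_le_comap]
        intro s hs
        rw [Ideal.mem_comap, ← Localization.AtPrime.map_eq_maximalIdeal]
        exact Ideal.mem_map_of_mem _ hs
      · rw [map_add]; exact add_mem hy hz
    rw [← algebraMap_smul S t x, map_smul,
      ← algebraMap_smul (Localization.AtPrime P) (algebraMap R S t)] at h1
    have hu : IsUnit (algebraMap S (Localization.AtPrime P) (algebraMap R S t)) :=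
      IsLocalization.map_units (M := P.primeCompl) _ ⟨_, ht⟩
    exact (Submodule.smul_mem_iff_of_isUnit T hu).mp h1
  rwa [Ideal.iInf_pow_smul_eq_bot_of_isLocalRing _ Ideal.IsPrime.ne_top', Submodule.mem_bot] at key

/-- Let `J` be an ideal of an `R`-algebra `B` and let `A` be the localization of `B` at the image
of a submonoid `T` of `R`. If `A ⊗ N` is flat over `A`, then `N ⊗ J → N ⊗ B` is injective up to
`T`-torsion. -/
theorem exists_smul_eq_zero_of_flat {N B A : Type} [AddCommGroup N] [Module R N]
    [CommRing B] [Algebra R B] [CommRing A] [Algebra R A] [Algebra B A] [IsScalarTower R B A]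
    (T : Submonoid R) [IsLocalization (Algebra.algebraMapSubmonoid B T) A]
    (hfl : Module.Flat A (A ⊗[R] N)) (J : Ideal B)
    (y : N ⊗[R] J) (hy : (J.subtype.restrictScalars R).lTensor N y = 0) :
    ∃ t ∈ T, t • y = 0 := by
  have hBA : Module.Flat B A := IsLocalization.flat _ (Algebra.algebraMapSubmonoid B T)
  have e : A ⊗[B] (B ⊗[R] N) ≃ₗ[A] A ⊗[R] N :=
    TensorProduct.AlgebraTensorModule.cancelBaseChange R B A A N
  have : Module.Flat A (A ⊗[B] (B ⊗[R] N)) := Module.Flat.of_linearEquiv e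
  have : Module.Flat B (A ⊗[B] (B ⊗[R] N)) := Module.Flat.trans B A _
  set T' := Algebra.algebraMapSubmonoid B T
  let j : (B ⊗[R] N) →ₗ[B] A ⊗[B] (B ⊗[R] N) := TensorProduct.mk B A _ 1
  have : IsLocalizedModule T' j :=
    (isLocalizedModule_iff_isBaseChange T' A j).mpr (TensorProduct.isBaseChange B _ A)
  have hinj := Module.Flat.lTensor_preserves_injective_linearMap
    (M := A ⊗[B] (B ⊗[R] N)) J.subtype J.injective_subtype
  -- `n ⊗ b ↦ (1 ⊗ n) ⊗ b` identifies `N ⊗[R] K` with `(B ⊗[R] N) ⊗[B] K` for `B`-modules `K`.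
  let e1 : N ⊗[R] J ≃ₗ[R] (B ⊗[R] N) ⊗[B] J := TensorProduct.comm R N J ≪≫ₗ
    (TensorProduct.AlgebraTensorModule.cancelBaseChange R B B J N).symm.restrictScalars R ≪≫ₗ
    (TensorProduct.comm B J (B ⊗[R] N)).restrictScalars R
  let e2 : N ⊗[R] B ≃ₗ[R] (B ⊗[R] N) ⊗[B] B := TensorProduct.comm R N B ≪≫ₗ
    (TensorProduct.AlgebraTensorModule.cancelBaseChange R B B B N).symm.restrictScalars R ≪≫ₗ
    (TensorProduct.comm B B (B ⊗[R] N)).restrictScalars R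
  have hnat : ∀ z : N ⊗[R] J, J.subtype.lTensor (B ⊗[R] N) (e1 z) =
      e2 ((J.subtype.restrictScalars R).lTensor N z) := by
    intro z
    induction z with
    | zero => simp
    | tmul n b => simp [e1, e2]
    | add z w hz hw => simp only [map_add, hz, hw]
  have h0 : TensorProduct.AlgebraTensorModule.rTensor B J j (e1 y) = 0 := by
    apply hinj
    have h1 : J.subtype.lTensor (B ⊗[R] N) (e1 y) = 0 := by rw [hnat, hy, map_zero]
    have h2 := congrArg (j.rTensor B) h1
    rw [map_zero] at h2 ⊢
    rw [← h2]
    change (J.subtype.lTensor _ ∘ₗ j.rTensor J) (e1 y) = (j.rTensor B ∘ₗ J.subtype.lTensor _) (e1 y)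
    rw [LinearMap.rTensor_comp_lTensor, LinearMap.lTensor_comp_rTensor]
  obtain ⟨⟨_, t, ht, rfl⟩, hc⟩ := (IsLocalizedModule.eq_zero_iff T'
    (TensorProduct.AlgebraTensorModule.rTensor B J j)).mp h0
  refine ⟨t, ht, e1.injective ?_⟩
  rw [map_smul, map_zero, ← algebraMap_smul B t]
  exact hc

/-- A form of the local criterion of flatness. The Artin-Rees lemma puts every element of the
kernel of `N ⊗ I → N` into `p ^ k • (N ⊗ I)`, up to a factor outside the prime `p`, for all `k`;
Krull's intersection theorem at the primes of `S` then shows that it vanishes. -/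
theorem flat_of_forall_flatAlong [IsNoetherianRing R] [IsNoetherianRing S] {N : Type}
    [AddCommGroup N] [Module R N] [Module S N] [IsScalarTower R S N] [Module.Finite S N]
    (H : ∀ (p : Ideal R) [p.IsPrime] (n : ℕ), FlatAlong
      (algebraMap R (Localization (Algebra.algebraMapSubmonoid (R ⧸ p ^ n) p.primeCompl))) N) :
    Module.Flat R N := by
  rw [Module.Flat.iff_lTensor_injective']
  intro I
  rw [injective_iff_map_eq_zero]
  intro x hx
  have : Module.Finite S (N ⊗[R] I) := by
    obtain ⟨m, g, hg⟩ := Module.Finite.exists_fin' R I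
    have e : N ⊗[R] (Fin m → R) ≃ₗ[S] (Fin m → N) := TensorProduct.piScalarRight R S N (Fin m)
    have : Module.Finite S (N ⊗[R] (Fin m → R)) := Module.Finite.equiv e.symm
    exact Module.Finite.of_surjective (TensorProduct.AlgebraTensorModule.lTensor S N g)
      (LinearMap.lTensor_surjective N hg)
  refine Module.eq_zero_of_localization_maximal (R := S)
    (fun P _ => LocalizedModule P.primeCompl (N ⊗[R] I))
    (fun P _ => LocalizedModule.mkLinearMap P.primeCompl (N ⊗[R] I)) x fun P hP => ?_
  refine mkLinearMap_eq_zero_of_forall_pow (R := R) P x fun k => ?_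
  set p := P.comap (algebraMap R S) with hp
  -- Artin-Rees: modulo `p ^ n` with `n = n₀ + k`, only `p ^ k * I` is lost from `I`.
  obtain ⟨n₀, hn₀⟩ := Ideal.exists_pow_inf_eq_pow_smul p I
  set n := n₀ + k with hn
  have hAR : p ^ n ⊓ I ≤ p ^ k * I := by
    have h1 := hn₀ n (by omega)
    simp only [smul_eq_mul, Ideal.mul_top] at h1
    rw [h1, hn, Nat.add_sub_cancel_left]
    exact Ideal.mul_mono_right inf_le_right
  let B := R ⧸ p ^ n
  let J : Ideal B := I.map (Ideal.Quotient.mk (p ^ n))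
  let π : I →ₗ[R] J := (Algebra.linearMap R B).restrict (p := I) (q := J.restrictScalars R)
    (fun r hr => Ideal.mem_map_of_mem _ hr)
  have hπ : Function.Surjective π := by
    rintro ⟨b, hb⟩
    obtain ⟨r, hr, rfl⟩ := (Ideal.mem_map_iff_of_surjective _ Ideal.Quotient.mk_surjective).mp hb
    exact ⟨⟨r, hr⟩, rfl⟩
  obtain ⟨t, ht, hty⟩ := exists_smul_eq_zero_of_flat p.primeCompl (H p n).flat_baseChange
    J (π.lTensor N x) (by
    have h2 := congrArg ((Algebra.linearMap R B).lTensor N) hx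
    rw [map_zero] at h2
    rw [← h2, ← LinearMap.comp_apply, ← LinearMap.comp_apply, ← LinearMap.lTensor_comp,
      ← LinearMap.lTensor_comp]
    rfl)
  -- `t • x` dies in `N ⊗ J`, so it comes from `N ⊗ ker π`, and `ker π = p ^ n ⊓ I`.
  refine ⟨t, ht, ?_⟩
  rw [← map_smul] at hty
  obtain ⟨w, hw⟩ := (lTensor_exact N (LinearMap.exact_subtype_ker_map π) hπ (t • x)).mp hty
  rw [← hw]
  clear hw
  induction w with
  | zero => simp
  | add w₁ w₂ h₁ h₂ => rw [map_add]; exact add_mem h₁ h₂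
  | tmul a b =>
    have hb : (b : I) ∈ (p ^ k • ⊤ : Submodule R I) := by
      rw [Submodule.mem_smul_top_iff]
      refine hAR ⟨?_, b.1.2⟩
      have h3 : π b = 0 := b.2
      exact Ideal.Quotient.eq_zero_iff_mem.mp (congrArg Subtype.val h3)
    have h4 := Submodule.mem_map_of_mem (f := TensorProduct.mk R N I a) hb
    rw [Submodule.map_smul''] at h4
    exact Submodule.smul_mono le_rfl le_top h4

end LocalCriterion

/-- **Flatness of unit modules.** Let `S` be a Noetherian algebra over a Noetherian ring `R` on
which `f` is the `q`-power map with `q ≥ 2`. A finitely generated `S`-module that is a unit module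
over `(R, f)` is flat over `R`. -/
theorem flat_of_unit {R S : Type} [CommRing R] [CommRing S] [Algebra R S]
    [IsNoetherianRing R] [IsNoetherianRing S] (q : ℕ) (hq : 1 < q) (f : R →+* R)
    (hf : ∀ r, f r = r ^ q) {N : Type} [AddCommGroup N] [Module R N] [Module S N]
    [IsScalarTower R S N] [Module.Finite S N]
    (φ : N →ₗ[R] Restrict f N) (hφ : IsBaseChange (Twist f) φ) : Module.Flat R N := by
  refine flat_of_forall_flatAlong (S := S) fun p _ n => ?_
  set A := Localization (Algebra.algebraMapSubmonoid (R ⧸ p ^ n) p.primeCompl)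
  have hA : ∀ r : R, algebraMap R A r = algebraMap (R ⧸ p ^ n) A (algebraMap R (R ⧸ p ^ n) r) :=
    fun r => IsScalarTower.algebraMap_apply R (R ⧸ p ^ n) A r
  refine flatAlong_of_nilpotent q f hf φ hφ p n _ (fun r hr => ?_) (fun r hr => ?_)
  · have h1 : r ^ q ^ n ∈ p ^ n :=
      Ideal.pow_le_pow_right (Nat.lt_pow_self hq).le (Ideal.pow_mem_pow hr _)
    rw [← map_pow, hA, Ideal.Quotient.algebraMap_eq, Ideal.Quotient.eq_zero_iff_mem.mpr h1,
      map_zero]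
  · rw [hA]
    exact IsLocalization.map_units (M := Algebra.algebraMapSubmonoid (R ⧸ p ^ n) p.primeCompl) A
      ⟨_, r, hr, rfl⟩

/-! ### Kernels of maps of unit modules -/

/-- The kernel of a surjection of unit modules with flat target is again a unit module. -/
theorem isBaseChange_of_exact {R : Type} [CommRing R] (f : R →+* R) {Q M N : Type}
    [AddCommGroup Q] [AddCommGroup M] [AddCommGroup N] [Module R Q] [Module R M] [Module R N]
    (ι : Q →ₗ[R] M) (α : M →ₗ[R] N) (hι : Function.Injective ι) (hα : Function.Surjective α)
    (hex : Function.Exact ι α) [Module.Flat R N]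
    (ψQ : Q →ₗ[R] Restrict f Q) (ψM : M →ₗ[R] Restrict f M) (ψN : N →ₗ[R] Restrict f N)
    (hQM : ∀ x, ι (ψQ x).out = (ψM (ι x)).out) (hMN : ∀ x, α (ψM x).out = (ψN (α x)).out)
    (hM : IsBaseChange (Twist f) ψM) (hN : IsBaseChange (Twist f) ψN) :
    IsBaseChange (Twist f) ψQ := by
  have hcQ : ∀ z : Twist f ⊗[R] Q, ι (ψQ.liftBaseChange (Twist f) z).out =
      (hM.equiv (ι.lTensor (Twist f) z)).out := by
    intro z
    induction z with
    | zero => rw [map_zero, map_zero, map_zero]; exact map_zero ι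
    | add z w hz hw =>
      rw [map_add, map_add, map_add]
      exact (map_add ι _ _).trans (congrArg₂ (· + ·) hz hw)
    | tmul s m =>
      rw [LinearMap.liftBaseChange_tmul, LinearMap.lTensor_tmul, IsBaseChange.equiv_tmul]
      exact (map_smul ι (show R from s) _).trans (congrArg _ (hQM m))
  have hcM : ∀ z : Twist f ⊗[R] M, α (hM.equiv z).out =
      (hN.equiv (α.lTensor (Twist f) z)).out := by
    intro z
    induction z with
    | zero => rw [map_zero, map_zero, map_zero]; exact map_zero α
    | add z w hz hw =>
      rw [map_add, map_add, map_add]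
      exact (map_add α _ _).trans (congrArg₂ (· + ·) hz hw)
    | tmul s m =>
      rw [LinearMap.lTensor_tmul, IsBaseChange.equiv_tmul, IsBaseChange.equiv_tmul]
      exact (map_smul α (show R from s) _).trans (congrArg _ (hMN m))
  -- Flatness of `N` makes the pulled back sequence left exact.
  have hinj : Function.Injective (ι.lTensor (Twist f)) :=
    LinearMap.lTensor_injective_of_exact_of_flat α hα ι hι hex _
  have hbij : Function.Bijective (ψQ.liftBaseChange (Twist f)) := by
    constructor
    · intro z w hzw
      apply hinj
      apply hM.equiv.injective
      exact (hcQ z).symm.trans ((congrArg (fun u => ι (Restrict.out u)) hzw).trans (hcQ w))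
    · intro x
      obtain ⟨y, hy⟩ := hM.equiv.surjective (show Restrict f M from ι x.out)
      have h0 : α.lTensor (Twist f) y = 0 := by
        apply hN.equiv.injective
        rw [map_zero]
        refine (hcM y).symm.trans ?_
        rw [hy]
        exact hex.apply_apply_eq_zero x.out
      obtain ⟨z, rfl⟩ := (lTensor_exact (Twist f) hex hα y).mp h0
      exact ⟨z, hι ((hcQ z).trans hy)⟩
  exact IsBaseChange.of_equiv (LinearEquiv.ofBijective _ hbij) fun x => by simp

/-! ### Unit structures over `Λ ⊗ R` and over `R` -/

section Comparison

attribute [local instance] Algebra.TensorProduct.rightAlgebra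

variable {k Λ R : Type} [CommRing k] [CommRing Λ] [Algebra k Λ] [CommRing R] [Algebra k R]

/-- The base change to an `R`-algebra `W` of a `Λ ⊗ R`-module `M` is a `Λ ⊗ W`-module: `Λ` acts
through `M` and `W` acts through itself. -/
theorem exists_module_baseChange (W M : Type) [CommRing W] [Algebra k W] [Algebra R W]
    [IsScalarTower k R W] [AddCommGroup M] [Module (Λ ⊗[k] R) M] [Module R M]
    [IsScalarTower R (Λ ⊗[k] R) M] :
    ∃ _ : Module (Λ ⊗[k] W) (W ⊗[R] M), ∀ (l : Λ) (r s : W) (m : M),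
      (l ⊗ₜ[k] r) • (s ⊗ₜ[R] m) = (r * s) ⊗ₜ[R] ((l ⊗ₜ[k] (1 : R)) • m) := by
  let ρ : Λ →+* Module.End W (W ⊗[R] M) :=
    (Module.End.baseChangeHom R W M : _ →+* _).comp
      ((Algebra.lsmul R R M : (Λ ⊗[k] R) →ₐ[R] Module.End R M).toRingHom.comp
        (Algebra.TensorProduct.includeLeftRingHom))
  let i3 : Module Λ (W ⊗[R] M) := Module.compHom _ ρ
  have hρ : ∀ (l : Λ) (s : W) (m : M),
    l • (s ⊗ₜ[R] m) = s ⊗ₜ[R] ((l ⊗ₜ[k] (1 : R)) • m) := fun l s m => rfl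
  have i5 : SMulCommClass Λ W (W ⊗[R] M) := ⟨fun l s x => (ρ l).map_smul s x⟩
  have i6 : IsScalarTower k Λ (W ⊗[R] M) := ⟨fun c l x => by
    induction x with
    | zero => simp
    | add x y hx hy => simp only [smul_add, hx, hy]
    | tmul s m =>
      rw [hρ, hρ]
      have h1 : ((c • l) ⊗ₜ[k] (1 : R)) • m = (algebraMap k R c) • (l ⊗ₜ[k] (1 : R)) • m := by
        rw [← algebraMap_smul (Λ ⊗[k] R) (algebraMap k R c), ← mul_smul]
        congr 1
        rw [Algebra.TensorProduct.right_algebraMap_apply, Algebra.TensorProduct.tmul_mul_tmul,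
          one_mul, mul_one, TensorProduct.smul_tmul, Algebra.algebraMap_eq_smul_one]
      rw [h1, ← TensorProduct.smul_tmul, algebraMap_smul, TensorProduct.smul_tmul']⟩
  let i7 : Module (Λ ⊗[k] W) (W ⊗[R] M) := TensorProduct.Algebra.module
  refine ⟨i7, fun l r s m => ?_⟩
  change l • r • (s ⊗ₜ[R] m) = _
  rw [TensorProduct.smul_tmul', hρ, smul_eq_mul]

variable (F : (Λ ⊗[k] R) →+* (Λ ⊗[k] R)) (f : R →ₐ[k] R)
  {M : Type} [AddCommGroup M] [Module (Λ ⊗[k] R) M] [Module R M] [IsScalarTower R (Λ ⊗[k] R) M]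

/-- The Frobenius pullback over `R` of a `Λ ⊗ R`-module is again a `Λ ⊗ R`-module. -/
theorem exists_twisted_module (M : Type) [AddCommGroup M] [Module (Λ ⊗[k] R) M] [Module R M]
    [IsScalarTower R (Λ ⊗[k] R) M] :
    ∃ _ : Module (Λ ⊗[k] R) (Twist (f : R →+* R) ⊗[R] M), ∀ (l : Λ) (r : R)
      (s : Twist (f : R →+* R)) (m : M), (l ⊗ₜ[k] r) • (s ⊗ₜ[R] m) =
        ((show Twist (f : R →+* R) from r) * s) ⊗ₜ[R] ((l ⊗ₜ[k] (1 : R)) • m) := by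
  let i1 : Algebra k (Twist (f : R →+* R)) := (inferInstance : Algebra k R)
  have i2 : IsScalarTower k R (Twist (f : R →+* R)) :=
    IsScalarTower.of_algebraMap_eq fun c => (f.commutes c).symm
  exact exists_module_baseChange (Twist (f : R →+* R)) M

/-- An `F`-semilinear endomorphism of a `Λ ⊗ R`-module, where `F` acts by `f` on `R`, viewed as an
`f`-semilinear endomorphism of the underlying `R`-module. -/
def restrictStructure (hF : ∀ (l : Λ) (r : R), F (l ⊗ₜ[k] r) = l ⊗ₜ[k] f r)
    (φ : M →ₗ[Λ ⊗[k] R] Restrict F M) : M →ₗ[R] Restrict (f : R →+* R) M where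
  toFun m := (φ m).out
  map_add' x y := congrArg Restrict.out (map_add φ x y)
  map_smul' r x := by
    rw [← algebraMap_smul (Λ ⊗[k] R) r x, map_smul,
      Algebra.TensorProduct.right_algebraMap_apply]
    change F (1 ⊗ₜ[k] r) • (φ x).out = f r • (φ x).out
    rw [hF, ← algebraMap_smul (Λ ⊗[k] R) (f r), Algebra.TensorProduct.right_algebraMap_apply]

/-- A unit structure over `(Λ ⊗ R, F)` is a unit structure over `(R, f)`. The pullback of `M` along
`f` is a `Λ ⊗ R`-module which receives the `F`-semilinear map `m ↦ 1 ⊗ m`, and the universal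
property of `φ` turns this map into an inverse of the comparison map to `M`. -/
theorem isBaseChange_of_along
    (hF : ∀ (l : Λ) (r : R), F (l ⊗ₜ[k] r) = l ⊗ₜ[k] f r)
    (φ : M →ₗ[Λ ⊗[k] R] Restrict F M) (ψ : M →ₗ[R] Restrict (f : R →+* R) M)
    (hφψ : ∀ x, (ψ x).out = (φ x).out) (h : IsBaseChangeAlong F φ) :
    IsBaseChange (Twist (f : R →+* R)) ψ := by
  let W := Twist (f : R →+* R)
  obtain ⟨i, hi⟩ := exists_twisted_module f M (Λ := Λ)
  have hR : ∀ (r : R) (m : M), r • m = ((1 : Λ) ⊗ₜ[k] r) • m := fun r m => by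
    rw [← algebraMap_smul (Λ ⊗[k] R) r m, Algebra.TensorProduct.right_algebraMap_apply]
  have hsplit : ∀ (l : Λ) (r : R), (l ⊗ₜ[k] r) = (1 ⊗ₜ[k] r) * (l ⊗ₜ[k] (1 : R)) := fun l r => by
    simp
  let h0 : M →ₗ[Λ ⊗[k] R] Restrict F (W ⊗[R] M) :=
    { toFun := fun m => (1 : W) ⊗ₜ[R] m
      map_add' := fun x y => TensorProduct.tmul_add _ _ _
      map_smul' := fun s m => by
        change _ = F s • ((1 : W) ⊗ₜ[R] m)
        induction s with
        | zero => simp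
        | add s t hs ht =>
          rw [add_smul, TensorProduct.tmul_add, map_add, add_smul]
          exact congrArg₂ (· + ·) hs ht
        | tmul l r =>
          rw [hF, hi, hsplit, mul_smul, ← hR, ← TensorProduct.smul_tmul]
          rfl }
  obtain ⟨H, hH, -⟩ := h (W ⊗[R] M) h0
  obtain ⟨_, -, huniq⟩ := h M φ
  let ℓ : W ⊗[R] M →ₗ[W] Restrict (f : R →+* R) M := ψ.liftBaseChange W
  have hℓ : ∀ (s : W) (m : M), (ℓ (s ⊗ₜ m)).out = (show R from s) • (φ m).out := fun s m => by
    rw [← hφψ]; exact congrArg Restrict.out (LinearMap.liftBaseChange_tmul ..)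
  let ℓ' : W ⊗[R] M →ₗ[Λ ⊗[k] R] M :=
    { toFun := fun z => (ℓ z).out
      map_add' := fun x y => congrArg Restrict.out (map_add ℓ x y)
      map_smul' := fun s z => by
        change (ℓ (s • z)).out = s • (ℓ z).out
        induction z with
        | zero => rw [smul_zero, map_zero]; change (0 : M) = s • (0 : M); rw [smul_zero]
        | add z w hz hw =>
          rw [smul_add, map_add, map_add]
          exact (congrArg₂ (· + ·) hz hw).trans (smul_add s _ _).symm
        | tmul t m =>
          induction s with
          | zero => rw [zero_smul, zero_smul, map_zero]; rfl
          | add s₁ s₂ h₁ h₂ =>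
            rw [add_smul, add_smul, map_add]
            exact congrArg₂ (· + ·) h₁ h₂
          | tmul l r =>
            have h2 : (φ ((l ⊗ₜ[k] (1 : R)) • m)).out = (l ⊗ₜ[k] (1 : R)) • (φ m).out := by
              rw [map_smul]
              change F (l ⊗ₜ[k] (1 : R)) • (φ m).out = _
              rw [hF, map_one]
            rw [hi, hℓ, hℓ, h2, hR, hR, ← mul_smul, ← mul_smul]
            congr 1
            rw [Algebra.TensorProduct.tmul_mul_tmul, Algebra.TensorProduct.tmul_mul_tmul, one_mul,
              mul_one, mul_one]
            rfl }
  have hHℓ : ∀ z, H (ℓ' z) = z := by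
    intro z
    induction z with
    | zero => rw [map_zero, map_zero]
    | add z w hz hw => rw [map_add, map_add, hz, hw]
    | tmul s m =>
      change H (ℓ (s ⊗ₜ m)).out = _
      rw [hℓ, hR, map_smul, hH]
      change (1 ⊗ₜ[k] (show R from s)) • ((1 : W) ⊗ₜ[R] m) = _
      rw [hi, ← Algebra.TensorProduct.one_def, one_smul, mul_one]
  have hℓH : ∀ x, ℓ' (H x) = x := by
    have h1 := huniq (ℓ' ∘ₗ H) fun n => by
      rw [LinearMap.comp_apply, hH]
      change (ℓ ((1 : W) ⊗ₜ n)).out = _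
      rw [hℓ]
      exact one_smul R _
    have h2 := huniq LinearMap.id fun n => rfl
    exact LinearMap.congr_fun (h1.trans h2.symm)
  have hbij : Function.Bijective ℓ :=
    Function.bijective_iff_has_inverse.mpr ⟨H, hHℓ, hℓH⟩
  exact IsBaseChange.of_equiv (LinearEquiv.ofBijective ℓ hbij) fun x => by
    rw [LinearEquiv.ofBijective_apply, LinearMap.liftBaseChange_tmul, one_smul]

/-- A unit structure over `(R, f)` whose structure map is `F`-semilinear is a unit structure over
`(Λ ⊗ R, F)`: the `R`-linear factorization of an `F`-semilinear map is automatically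
`Λ ⊗ R`-linear, because `F` fixes `Λ` and `M` is spanned over `R` by the image of `φ`. -/
theorem along_of_isBaseChange
    (hF : ∀ (l : Λ) (r : R), F (l ⊗ₜ[k] r) = l ⊗ₜ[k] f r)
    (φ : M →ₗ[Λ ⊗[k] R] Restrict F M) (ψ : M →ₗ[R] Restrict (f : R →+* R) M)
    (hφψ : ∀ x, (ψ x).out = (φ x).out) (h : IsBaseChange (Twist (f : R →+* R)) ψ) :
    IsBaseChangeAlong F φ := by
  let W := Twist (f : R →+* R)
  have hR : ∀ (r : R) (m : M), r • m = ((1 : Λ) ⊗ₜ[k] r) • m := fun r m => by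
    rw [← algebraMap_smul (Λ ⊗[k] R) r m, Algebra.TensorProduct.right_algebraMap_apply]
  -- `M` is spanned by the image of `φ` under the action of `R` alone.
  have hind : ∀ (p : M → Prop), p 0 → (∀ x y, p x → p y → p (x + y)) →
      (∀ (r : R) (n : M), p (r • (φ n).out)) → ∀ x, p x := by
    intro p p0 padd pgen x
    obtain ⟨z, hz⟩ := h.equiv.surjective (show Restrict (f : R →+* R) M from x)
    have h1 : ∀ z : W ⊗[R] M, p (h.equiv z).out := by
      intro z
      induction z with
      | zero => rw [map_zero]; exact p0
      | add z w hz hw => rw [map_add]; exact padd _ _ hz hw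
      | tmul s m =>
        rw [IsBaseChange.equiv_tmul]
        have := pgen s m
        rw [← hφψ] at this
        exact this
    have := h1 z
    rw [hz] at this
    exact this
  intro Q _ _ g
  let i1 : Module R Q := Module.compHom Q (algebraMap R (Λ ⊗[k] R))
  have hRQ : ∀ (r : R) (x : Q), r • x = ((1 : Λ) ⊗ₜ[k] r) • x := fun r x => rfl
  let g' : M →ₗ[R] Restrict (f : R →+* R) Q :=
    { toFun := fun m => (g m).out
      map_add' := fun x y => congrArg Restrict.out (map_add g x y)
      map_smul' := fun r x => by
        rw [hR, map_smul]
        change F (1 ⊗ₜ[k] r) • (g x).out = f r • (g x).out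
        rw [hF, hRQ] }
  let H0 := h.lift g'
  have hH0 : ∀ n, H0 (ψ n) = g' n := h.lift_eq g'
  let H1 : M →+ Q :=
    { toFun := fun x => (H0 x).out
      map_zero' := congrArg Restrict.out (map_zero H0)
      map_add' := fun x y => congrArg Restrict.out (map_add H0 x y) }
  have hH1 : ∀ (r : R) (n : M), H1 (r • (φ n).out) = r • (g n).out := fun r n => by
    rw [← hφψ]
    exact congrArg Restrict.out ((map_smul H0 (show W from r) (ψ n)).trans (by rw [hH0]; rfl))
  let H : M →ₗ[Λ ⊗[k] R] Q :=
    { toFun := H1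
      map_add' := map_add H1
      map_smul' := fun s x => by
        change H1 (s • x) = s • H1 x
        revert x
        refine hind _ ?_ (fun x y hx hy => ?_) (fun r n => ?_)
        · rw [smul_zero, map_zero, smul_zero]
        · rw [smul_add, map_add, map_add, smul_add, hx, hy]
        · induction s with
          | zero => rw [zero_smul, zero_smul, map_zero]
          | add s₁ s₂ h₁ h₂ =>
            rw [add_smul, add_smul, map_add, h₁, h₂]
          | tmul l r' =>
            have h2 : (φ ((l ⊗ₜ[k] (1 : R)) • n)).out = (l ⊗ₜ[k] (1 : R)) • (φ n).out := by
              rw [map_smul]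
              change F (l ⊗ₜ[k] (1 : R)) • (φ n).out = _
              rw [hF, map_one]
            have h3 : (g ((l ⊗ₜ[k] (1 : R)) • n)).out = (l ⊗ₜ[k] (1 : R)) • (g n).out := by
              rw [map_smul]
              change F (l ⊗ₜ[k] (1 : R)) • (g n).out = _
              rw [hF, map_one]
            have h4 : (l ⊗ₜ[k] r') • r • (φ n).out =
                (r' * r) • (φ ((l ⊗ₜ[k] (1 : R)) • n)).out := by
              rw [h2, hR, hR, ← mul_smul, ← mul_smul]
              simp
            rw [h4, hH1, hH1, h3, hRQ, hRQ, ← mul_smul, ← mul_smul]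
            simp }
  refine ⟨H, fun n => ?_, fun H' hH' => LinearMap.ext ?_⟩
  · change H1 (φ n).out = _
    have := hH1 1 n
    rwa [one_smul, one_smul] at this
  · refine hind _ ?_ (fun x y hx hy => ?_) (fun r n => ?_)
    · rw [map_zero, map_zero]
    · rw [map_add, map_add, hx, hy]
    · change _ = H1 (r • (φ n).out)
      rw [hH1, hR, map_smul, hH', hRQ]

end Comparison

/-- **Kernels of maps of unit modules are unit** (key step of Theorem `cohu`). Let `R` be
a connected Noetherian `F_q`-algebra, `Λ` essentially of finite type over `F_q`,
`S = Λ ⊗[F_q] R`, and `F : S → S` the Frobenius.  Let `M`, `N` be finitely generated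
`S`-modules with unit structures `φ_M`, `φ_N`, and `α : M → N` a surjective `S`-linear map
commuting with the unit structures. Then the kernel `Q = ker α` carries an induced
`F`-semilinear map `φ_Q` (the restriction of `φ_M`), and `φ_Q` is a unit structure, i.e.
the linearization `F*Q → Q` is an isomorphism. -/
theorem kernel_of_unit_module_surjection_is_unit
    (Fq : Type) [Field Fq] [Fintype Fq]
    (Λ : Type) [CommRing Λ] [Algebra Fq Λ] (hΛ : Algebra.EssFiniteType Fq Λ)
    (R : Type) [CommRing R] [Algebra Fq R] [IsNoetherianRing R]
    [ConnectedSpace (PrimeSpectrum R)]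
    (F : (Λ ⊗[Fq] R) →+* (Λ ⊗[Fq] R))
    (hF : ∀ (l : Λ) (r : R), F (l ⊗ₜ[Fq] r) = l ⊗ₜ[Fq] (r ^ Fintype.card Fq))
    (M : Type) [AddCommGroup M] [Module (Λ ⊗[Fq] R) M] [Module.Finite (Λ ⊗[Fq] R) M]
    (N : Type) [AddCommGroup N] [Module (Λ ⊗[Fq] R) N] [Module.Finite (Λ ⊗[Fq] R) N]
    (φM : M →ₗ[Λ ⊗[Fq] R] Restrict F M) (hφM : IsBaseChangeAlong F φM)
    (φN : N →ₗ[Λ ⊗[Fq] R] Restrict F N) (hφN : IsBaseChangeAlong F φN)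
    (α : M →ₗ[Λ ⊗[Fq] R] N) (hα : Function.Surjective α)
    (hcomm : ∀ x : M, (φN (α x)).out = α ((φM x).out)) :
    ∃ φQ : (LinearMap.ker α) →ₗ[Λ ⊗[Fq] R] Restrict F (LinearMap.ker α),
      (∀ x : LinearMap.ker α, (((φQ x).out : LinearMap.ker α) : M) = (φM (x : M)).out) ∧
      IsBaseChangeAlong F φQ := by
  let f := FiniteField.frobeniusAlgHom Fq R
  have hf : ∀ r, f r = r ^ Fintype.card Fq := fun r => rfl
  have hFf : ∀ (l : Λ) (r : R), F (l ⊗ₜ[Fq] r) = l ⊗ₜ[Fq] f r := hF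
  let iA : Algebra R (Λ ⊗[Fq] R) := Algebra.TensorProduct.rightAlgebra
  have : IsNoetherianRing (Λ ⊗[Fq] R) := by
    have : IsNoetherianRing (R ⊗[Fq] Λ) := Algebra.EssFiniteType.isNoetherianRing R _
    exact isNoetherianRing_of_ringEquiv _ (Algebra.TensorProduct.comm Fq R Λ).toRingEquiv
  let iM : Module R M := Module.compHom M (algebraMap R (Λ ⊗[Fq] R))
  let iN : Module R N := Module.compHom N (algebraMap R (Λ ⊗[Fq] R))
  have tM : IsScalarTower R (Λ ⊗[Fq] R) M := IsScalarTower.of_algebraMap_smul fun _ _ => rfl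
  have tN : IsScalarTower R (Λ ⊗[Fq] R) N := IsScalarTower.of_algebraMap_smul fun _ _ => rfl
  let φQ : LinearMap.ker α →ₗ[Λ ⊗[Fq] R] Restrict F (LinearMap.ker α) :=
    { toFun := fun x => (⟨(φM x).out, by
        rw [LinearMap.mem_ker, ← hcomm, LinearMap.mem_ker.mp x.2, map_zero]; rfl⟩ :
          LinearMap.ker α)
      map_add' := fun x y => Subtype.ext (congrArg Restrict.out (map_add φM (x : M) y))
      map_smul' := fun s x => Subtype.ext (congrArg Restrict.out (map_smul φM s (x : M))) }
  refine ⟨φQ, fun x => rfl, ?_⟩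
  let ψM := restrictStructure F f hFf φM
  let ψN := restrictStructure F f hFf φN
  let ψQ := restrictStructure F f hFf φQ
  have hM : IsBaseChange (Twist (f : R →+* R)) ψM :=
    isBaseChange_of_along F f hFf φM ψM (fun _ => rfl) hφM
  have hN : IsBaseChange (Twist (f : R →+* R)) ψN :=
    isBaseChange_of_along F f hFf φN ψN (fun _ => rfl) hφN
  have : Module.Flat R N :=
    flat_of_unit (S := Λ ⊗[Fq] R) (Fintype.card Fq) Fintype.one_lt_card (f : R →+* R) hf ψN hN
  exact along_of_isBaseChange F f hFf φQ ψQ (fun _ => rfl) <|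
    isBaseChange_of_exact (f : R →+* R) ((LinearMap.ker α).subtype.restrictScalars R)
      (α.restrictScalars R) (LinearMap.ker α).injective_subtype hα
      (LinearMap.exact_subtype_ker_map α) ψQ ψM ψN (fun _ => rfl) (fun x => (hcomm x).symm) hM hN
end
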